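/- arXiv:1609.00135 — 4 statements merged into one kernel-verified Lean document; each statement's English description precedes it below -/
import Mathlib

section
/- Let x be a solution of the heavy ball equation with vanishing damping and source term g satisfying ∫₀^∞ (1+t)^α ‖g(t)‖ dt < ∞, and suppose the interior of argmin Φ is nonempty. Then there exists x* ∈ argmin Φ such that x(t) → x* strongly in H (i.e. in norm) as t → +∞. -/
open MeasureTheory Filter Real Set RealInnerProductSpace

/-!
Write the damping as `γ = 1 / β`, with `β` positive and concave, and let `z` be an interior point of
`argmin Φ`. Moving a minimizer within a ball around `z` in the direction of the gradient shows
`r ‖∇Φ(u)‖ ≤ ⟪∇Φ(u), u - z⟫` for some `r > 0`. Once `β'` stays below some `κ < 1/3`, the function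
`W = (18 β² (Φ(x) - min Φ) + ‖2 (x - z) + 3 β x'‖²) / (1 - 3 β') + 2 ‖x - z‖²` satisfies
`W' ≤ C β ‖g‖ √W - 12 β r ‖∇Φ(x)‖`; hence `W` is bounded and `β ‖∇Φ(x)‖` is integrable. Since
`(β x')' = β (g - ∇Φ(x)) - (1 - β') x'`, the speed `‖x'‖` is then integrable as well, so `x` has a
strong limit, at which the integrable continuous curve `∇Φ(x)` must vanish.
-/

section ConvexGradient

variable {H : Type*} [NormedAddCommGroup H] [InnerProductSpace ℝ H] [CompleteSpace H]
  {Φ : H → ℝ} {G : H}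

theorem hasDerivAt_comp_of_hasGradientAt {x : ℝ → H} {v : H} {t : ℝ}
    (hΦ : HasGradientAt Φ G (x t)) (hx : HasDerivAt x v t) :
    HasDerivAt (fun s => Φ (x s)) ⟪G, v⟫ t := by
  have := hΦ.hasFDerivAt.comp_hasDerivAt t hx
  rw [InnerProductSpace.toDual_apply_apply] at this
  exact this

theorem sub_le_inner_of_convexOn_of_hasGradientAt {s : Set H} {u v : H} (hconv : ConvexOn ℝ s Φ)
    (hu : u ∈ s) (hv : v ∈ s) (hΦ : HasGradientAt Φ G u) :
    Φ u - Φ v ≤ ⟪G, u - v⟫ := by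
  let ℓ : ℝ →ᵃ[ℝ] H := AffineMap.lineMap u v
  have hline : HasDerivAt (fun τ => Φ (ℓ τ)) ⟪G, v - u⟫ 0 :=
    hasDerivAt_comp_of_hasGradientAt (by simpa [ℓ] using hΦ) AffineMap.hasDerivAt_lineMap
  have hslope : ⟪G, v - u⟫ ≤ slope (fun τ => Φ (ℓ τ)) 0 1 :=
    (hconv.comp_affineMap ℓ).le_slope_of_hasDerivAt (by simpa [ℓ] using hu)
      (by simpa [ℓ] using hv) one_pos hline
  have hslope_eq : slope (fun τ => Φ (ℓ τ)) 0 1 = Φ v - Φ u := by simp [slope_def_field, ℓ]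
  rw [← neg_sub v u, inner_neg_right]
  linarith

theorem mul_norm_le_inner_of_closedBall_subset_argmin {z u : H} {r : ℝ}
    (hconv : ConvexOn ℝ univ Φ) (hΦ : HasGradientAt Φ G u) (hr : 0 ≤ r)
    (hball : Metric.closedBall z r ⊆ {v | ∀ w, Φ v ≤ Φ w}) :
    r * ‖G‖ ≤ ⟪G, u - z⟫ := by
  let y : H := z + (r / ‖G‖) • G
  have hy : y ∈ Metric.closedBall z r := by
    rw [mem_closedBall_iff_norm, add_sub_cancel_left, norm_smul, norm_div, norm_norm,
      Real.norm_of_nonneg hr, div_mul_eq_mul_div]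
    exact div_le_of_le_mul₀ (norm_nonneg G) hr le_rfl
  have hmin : Φ y ≤ Φ u := hball hy u
  have hgrad : Φ u - Φ y ≤ ⟪G, u - y⟫ :=
    sub_le_inner_of_convexOn_of_hasGradientAt hconv (mem_univ u) (mem_univ y) hΦ
  have hinner : ⟪G, u - y⟫ = ⟪G, u - z⟫ - r * ‖G‖ := by
    have hcancel : r / ‖G‖ * ‖G‖ ^ 2 = r * ‖G‖ := by
      rcases eq_or_ne ‖G‖ 0 with h0 | h0
      · simp [h0]
      · field_simp
    rw [show u - y = u - z - (r / ‖G‖) • G by simp only [y]; abel, inner_sub_right,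
      inner_smul_right, real_inner_self_eq_norm_sq, hcancel]
  linarith

theorem isMin_of_hasGradientAt_zero {z : H} (hconv : ConvexOn ℝ univ Φ)
    (hΦ : HasGradientAt Φ 0 z) (u : H) : Φ z ≤ Φ u := by
  have := sub_le_inner_of_convexOn_of_hasGradientAt hconv (mem_univ z) (mem_univ u) hΦ
  rw [inner_zero_left] at this
  linarith

end ConvexGradient

section DifferentialInequalities

variable {T : ℝ}

theorem continuousOn_Ici_of_hasDerivAt {E : Type*} [NormedAddCommGroup E] [NormedSpace ℝ E]
    {f f' : ℝ → E} (hf : ∀ t ∈ Ici T, HasDerivAt f (f' t) t) : ContinuousOn f (Ici T) :=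
  fun t ht => (hf t ht).continuousAt.continuousWithinAt

variable {f f' K p : ℝ → ℝ}

theorem add_integral_le_of_hasDerivAt_le_sub {t : ℝ}
    (hf : ∀ s ∈ Ici T, HasDerivAt f (f' s) s) (hK : IntegrableOn K (Ioi T))
    (hp : ContinuousOn p (Ici T)) (hle : ∀ s ∈ Ici T, f' s ≤ K s - p s) (ht : T ≤ t) :
    f t + ∫ s in T..t, p s ≤ f T + ∫ s in Ioi T, ‖K s‖ := by
  have hKt : IntervalIntegrable K volume T t :=
    (intervalIntegrable_iff_integrableOn_Ioc_of_le ht).2 (hK.mono_set Ioc_subset_Ioi_self)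
  have hpt : IntervalIntegrable p volume T t :=
    ContinuousOn.intervalIntegrable_of_Icc ht (hp.mono Icc_subset_Ici_self)
  have hftc : f t - f T ≤ ∫ s in T..t, (K s - p s) :=
    intervalIntegral.sub_le_integral_of_hasDeriv_right_of_le ht
      ((continuousOn_Ici_of_hasDerivAt hf).mono Icc_subset_Ici_self)
      (fun s hs => (hf s hs.1.le).hasDerivWithinAt)
      ((intervalIntegrable_iff_integrableOn_Icc_of_le ht).1 (hKt.sub hpt))
      (fun s hs => hle s hs.1.le)
  have hK_le : ∫ s in T..t, K s ≤ ∫ s in Ioi T, ‖K s‖ :=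
    calc ∫ s in T..t, K s ≤ ‖∫ s in T..t, K s‖ := le_norm_self _
      _ ≤ ∫ s in Ioc T t, ‖K s‖ := by
        rw [intervalIntegral.integral_of_le ht]; exact norm_integral_le_integral_norm _
      _ ≤ ∫ s in Ioi T, ‖K s‖ := setIntegral_mono_set hK.norm
        (ae_of_all _ fun s => norm_nonneg _) Ioc_subset_Ioi_self.eventuallyLE
  rw [intervalIntegral.integral_sub hKt hpt] at hftc
  linarith

theorem integrableOn_Ioi_of_hasDerivAt_le_sub
    (hf : ∀ t ∈ Ici T, HasDerivAt f (f' t) t) (hf0 : ∀ t ∈ Ici T, 0 ≤ f t)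
    (hK : IntegrableOn K (Ioi T)) (hp : ContinuousOn p (Ici T)) (hp0 : ∀ t ∈ Ici T, 0 ≤ p t)
    (hle : ∀ t ∈ Ici T, f' t ≤ K t - p t) : IntegrableOn p (Ioi T) := by
  refine integrableOn_Ioi_of_intervalIntegral_norm_bounded (f T + ∫ s in Ioi T, ‖K s‖) T
    (fun t => (hp.mono Icc_subset_Ici_self).integrableOn_Icc.mono_set Ioc_subset_Icc_self)
    tendsto_id ?_
  filter_upwards [eventually_ge_atTop T] with t ht
  have hnorm : ∫ s in T..t, ‖p s‖ = ∫ s in T..t, p s :=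
    intervalIntegral.integral_congr fun s hs =>
      Real.norm_of_nonneg (hp0 s (uIcc_of_le ht ▸ hs).1)
  have := add_integral_le_of_hasDerivAt_le_sub hf hK hp hle ht
  have := hf0 t ht
  simp only [id_eq, hnorm]
  linarith

theorem exists_sqrt_le_of_hasDerivAt_le_mul_sqrt
    (hf : ∀ t ∈ Ici T, HasDerivAt f (f' t) t) (hf0 : ∀ t ∈ Ici T, 0 ≤ f t)
    (hK : IntegrableOn K (Ioi T)) (hK0 : ∀ t ∈ Ici T, 0 ≤ K t)
    (hle : ∀ t ∈ Ici T, f' t ≤ K t * √(f t)) : ∃ M, ∀ t ∈ Ici T, √(f t) ≤ M := by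
  -- `√f` need not be differentiable where `f = 0`, but `√(1 + f)` is.
  have hderiv : ∀ t ∈ Ici T, HasDerivAt (fun s => √(1 + f s)) (f' t / (2 * √(1 + f t))) t :=
    fun t ht => ((hf t ht).const_add 1).sqrt (by linarith [hf0 t ht])
  have hsqrt_le : ∀ t, √(f t) ≤ √(1 + f t) := fun t => Real.sqrt_le_sqrt (by linarith)
  refine ⟨√(1 + f T) + ∫ s in Ioi T, ‖K s‖, fun t ht => (hsqrt_le t).trans ?_⟩
  have hbound : ∀ s ∈ Ici T, f' s / (2 * √(1 + f s)) ≤ K s - 0 := by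
    intro s hs
    have hpos : 0 < √(1 + f s) := Real.sqrt_pos.2 (by linarith [hf0 s hs])
    rw [sub_zero, div_le_iff₀ (by positivity)]
    nlinarith [hle s hs, mul_le_mul_of_nonneg_left (hsqrt_le s) (hK0 s hs),
      mul_nonneg (hK0 s hs) hpos.le]
  simpa using add_integral_le_of_hasDerivAt_le_sub hderiv hK continuousOn_const hbound ht

theorem integrableOn_Ioi_of_hasDerivAt_le_mul_sqrt_sub
    (hf : ∀ t ∈ Ici T, HasDerivAt f (f' t) t) (hf0 : ∀ t ∈ Ici T, 0 ≤ f t)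
    (hK : IntegrableOn K (Ioi T)) (hK0 : ∀ t ∈ Ici T, 0 ≤ K t)
    (hp : ContinuousOn p (Ici T)) (hp0 : ∀ t ∈ Ici T, 0 ≤ p t)
    (hle : ∀ t ∈ Ici T, f' t ≤ K t * √(f t) - p t) : IntegrableOn p (Ioi T) := by
  obtain ⟨M, hM⟩ := exists_sqrt_le_of_hasDerivAt_le_mul_sqrt hf hf0 hK hK0
    fun t ht => (hle t ht).trans (sub_le_self _ (hp0 t ht))
  exact integrableOn_Ioi_of_hasDerivAt_le_sub hf hf0 (hK.mul_const M) hp hp0 fun t ht =>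
    (hle t ht).trans (sub_le_sub_right (mul_le_mul_of_nonneg_left (hM t ht) (hK0 t ht)) _)

theorem integrableOn_mul_norm_of_hasDerivAt_sub_smul {E : Type*} [NormedAddCommGroup E]
    [InnerProductSpace ℝ E] {y h : ℝ → E} {ρ : ℝ → ℝ} {M : ℝ}
    (hy : ∀ t ∈ Ici T, HasDerivAt y (h t - ρ t • y t) t) (hρ : ContinuousOn ρ (Ici T))
    (hρ0 : ∀ t ∈ Ici T, 0 ≤ ρ t) (hρM : ∀ t ∈ Ici T, ρ t ≤ M)
    (hK : IntegrableOn K (Ioi T)) (hhK : ∀ t ∈ Ici T, ‖h t‖ ≤ K t) :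
    IntegrableOn (fun t => ρ t * ‖y t‖) (Ioi T) := by
  -- `R` smooths `‖y‖` at its zeros, with an error `exp (-t)` that is integrable.
  let R : ℝ → ℝ := fun t => √(exp (-t) ^ 2 + ‖y t‖ ^ 2)
  have hR_pos : ∀ t, 0 < R t := fun t => Real.sqrt_pos.2 (by positivity)
  have hy_le_R : ∀ t, ‖y t‖ ≤ R t := fun t => Real.le_sqrt_of_sq_le (by nlinarith [exp_pos (-t)])
  have hR_le : ∀ t, R t ≤ ‖y t‖ + exp (-t) := fun t =>
    Real.sqrt_le_iff.2 ⟨by positivity, by nlinarith [norm_nonneg (y t), exp_pos (-t)]⟩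
  have hR_deriv : ∀ t ∈ Ici T,
      HasDerivAt R ((-exp (-t) ^ 2 + ⟪y t, h t - ρ t • y t⟫) / R t) t := by
    intro t ht
    have hexp : HasDerivAt (fun s => exp (-s) ^ 2) (-(2 * exp (-t) ^ 2)) t :=
      ((hasDerivAt_neg t).exp.fun_pow 2).congr_deriv (by push_cast; ring)
    refine ((hexp.fun_add (hy t ht).norm_sq).sqrt (by positivity)).congr_deriv ?_
    change _ / (2 * R t) = _
    rw [← mul_div_mul_left _ _ two_ne_zero]
    ring
  refine integrableOn_Ioi_of_hasDerivAt_le_sub hR_deriv (fun t _ => (hR_pos t).le)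
    (hK.add ((integrableOn_exp_neg_Ioi T).const_mul M))
    (hρ.mul (continuousOn_Ici_of_hasDerivAt hy).norm)
    (fun t ht => mul_nonneg (hρ0 t ht) (norm_nonneg _)) fun t ht => ?_
  have hsource : ⟪y t, h t⟫ ≤ K t * R t := by
    rw [mul_comm]
    exact (real_inner_le_norm _ _).trans
      (mul_le_mul (hy_le_R t) (hhK t ht) (norm_nonneg _) (hR_pos t).le)
  have hsmoothing : ρ t * ‖y t‖ * (R t - ‖y t‖) ≤ M * R t * exp (-t) :=
    mul_le_mul (mul_le_mul (hρM t ht) (hy_le_R t) (norm_nonneg _) ((hρ0 t ht).trans (hρM t ht)))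
      (by linarith [hR_le t]) (by linarith [hy_le_R t])
      (mul_nonneg ((hρ0 t ht).trans (hρM t ht)) (hR_pos t).le)
  rw [div_le_iff₀ (hR_pos t), inner_sub_right, inner_smul_right, real_inner_self_eq_norm_sq]
  simp only [Pi.add_apply]
  nlinarith [exp_pos (-t)]

end DifferentialInequalities

section Damping

theorem deriv_nonneg_of_concaveOn_Ici_of_nonneg {f : ℝ → ℝ} {m t T : ℝ}
    (hconc : ConcaveOn ℝ (Ici T) f) (hf0 : ∀ s ∈ Ici T, 0 ≤ f s) (ht : t ∈ Ici T)
    (hf : HasDerivAt f m t) : 0 ≤ m := by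
  by_contra! hm
  -- The tangent at `t` takes the value `m` at `s`.
  let s := t + (f t / -m + 1)
  have hts : t < s := lt_add_of_pos_right t
    (add_pos_of_nonneg_of_pos (div_nonneg (hf0 t ht) (by linarith)) one_pos)
  have hs : s ∈ Ici T := le_trans ht hts.le
  have hslope : slope f t s ≤ m := hconc.slope_le_of_hasDerivAt ht hs hts hf
  rw [slope_def_field, div_le_iff₀ (sub_pos.2 hts)] at hslope
  have htangent : m * (s - t) = m - f t := by
    have hm0 : m ≠ 0 := hm.ne
    simp only [s]
    field_simp
    ring
  linarith [hf0 s hs]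

/-- `β` is the inverse `1 / γ` of a damping coefficient `γ` on `[T, ∞)`; it is required to be
positive and concave there, with derivatives `β'` and `β''`. -/
structure IsConcaveInverseDamping (β β' β'' : ℝ → ℝ) (T : ℝ) : Prop where
  pos : ∀ t ∈ Ici T, 0 < β t
  hasDerivAt : ∀ t ∈ Ici T, HasDerivAt β (β' t) t
  hasDerivAt_deriv : ∀ t ∈ Ici T, HasDerivAt β' (β'' t) t
  deriv2_nonpos : ∀ t ∈ Ici T, β'' t ≤ 0

namespace IsConcaveInverseDamping

variable {β β' β'' : ℝ → ℝ} {S T : ℝ}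

theorem mono (hβ : IsConcaveInverseDamping β β' β'' T) (hTS : T ≤ S) :
    IsConcaveInverseDamping β β' β'' S where
  pos t ht := hβ.pos t (hTS.trans ht)
  hasDerivAt t ht := hβ.hasDerivAt t (hTS.trans ht)
  hasDerivAt_deriv t ht := hβ.hasDerivAt_deriv t (hTS.trans ht)
  deriv2_nonpos t ht := hβ.deriv2_nonpos t (hTS.trans ht)

theorem continuousOn (hβ : IsConcaveInverseDamping β β' β'' T) : ContinuousOn β (Ici T) :=
  continuousOn_Ici_of_hasDerivAt hβ.hasDerivAt

theorem concaveOn (hβ : IsConcaveInverseDamping β β' β'' T) : ConcaveOn ℝ (Ici T) β :=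
  concaveOn_of_hasDerivWithinAt2_nonpos (convex_Ici T) hβ.continuousOn
    (fun t ht => (hβ.hasDerivAt t (interior_subset ht)).hasDerivWithinAt)
    (fun t ht => (hβ.hasDerivAt_deriv t (interior_subset ht)).hasDerivWithinAt)
    (fun t ht => hβ.deriv2_nonpos t (interior_subset ht))

theorem deriv_nonneg (hβ : IsConcaveInverseDamping β β' β'' T) {t : ℝ} (ht : t ∈ Ici T) :
    0 ≤ β' t :=
  deriv_nonneg_of_concaveOn_Ici_of_nonneg hβ.concaveOn (fun s hs => (hβ.pos s hs).le) ht
    (hβ.hasDerivAt t ht)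

theorem monotoneOn (hβ : IsConcaveInverseDamping β β' β'' T) : MonotoneOn β (Ici T) :=
  monotoneOn_of_hasDerivWithinAt_nonneg (convex_Ici T) hβ.continuousOn
    (fun t ht => (hβ.hasDerivAt t (interior_subset ht)).hasDerivWithinAt)
    (fun _ ht => hβ.deriv_nonneg (interior_subset ht))

theorem integrableOn_of_mul_norm {E : Type*} [NormedAddCommGroup E] {y : ℝ → E}
    (hβ : IsConcaveInverseDamping β β' β'' T) (hy : ContinuousOn y (Ici T))
    (hint : IntegrableOn (fun t => β t * ‖y t‖) (Ioi T)) : IntegrableOn y (Ioi T) := by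
  refine (hint.const_mul (β T)⁻¹).mono'
    ((hy.mono Ioi_subset_Ici_self).aestronglyMeasurable measurableSet_Ioi)
    (ae_restrict_of_forall_mem measurableSet_Ioi fun t ht => ?_)
  rw [← div_eq_inv_mul, le_div_iff₀' (hβ.pos T self_mem_Ici)]
  exact mul_le_mul_of_nonneg_right
    (hβ.monotoneOn self_mem_Ici (Ioi_subset_Ici_self ht) (Ioi_subset_Ici_self ht)) (norm_nonneg _)

end IsConcaveInverseDamping

end Damping

section HeavyBall

variable {H : Type*} [NormedAddCommGroup H] [InnerProductSpace ℝ H]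
  {β β' β'' : ℝ → ℝ} {Φ : H → ℝ} {Φ' : H → H} {g x x' x'' : ℝ → H} {z : H} {S T κ r t : ℝ}

/-- The heavy ball equation on `[T, ∞)` with damping coefficient `1 / β`, potential gradient `Φ'`
and source `g`, for a curve `x` with velocity `x'` and acceleration `x''`. -/
structure IsHeavyBallTrajectory (β : ℝ → ℝ) (Φ' : H → H) (g x x' x'' : ℝ → H) (T : ℝ) : Prop where
  hasDerivAt : ∀ t ∈ Ici T, HasDerivAt x (x' t) t
  hasDerivAt_velocity : ∀ t ∈ Ici T, HasDerivAt x' (x'' t) t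
  equation : ∀ t ∈ Ici T, x'' t + (β t)⁻¹ • x' t + Φ' (x t) = g t

theorem IsHeavyBallTrajectory.mono (hx : IsHeavyBallTrajectory β Φ' g x x' x'' T) (hTS : T ≤ S) :
    IsHeavyBallTrajectory β Φ' g x x' x'' S where
  hasDerivAt t ht := hx.hasDerivAt t (hTS.trans ht)
  hasDerivAt_velocity t ht := hx.hasDerivAt_velocity t (hTS.trans ht)
  equation t ht := hx.equation t (hTS.trans ht)

theorem IsHeavyBallTrajectory.smul_acceleration (hx : IsHeavyBallTrajectory β Φ' g x x' x'' T)
    (ht : t ∈ Ici T) (hβ : β t ≠ 0) :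
    β t • x'' t = β t • (g t - Φ' (x t)) - x' t := by
  rw [← hx.equation t ht, add_sub_cancel_right, smul_add,
    smul_inv_smul₀ hβ, add_sub_cancel_right]

/-- The combination `2 (x - z) + 3 β x'` of position and velocity. The ratio `2 : 3` is the one for
which the energy below decays under the weakest bound on `β'`, namely `β' < 1/3`. -/
noncomputable def anchoredMomentum (β : ℝ → ℝ) (z : H) (x x' : ℝ → H) (t : ℝ) : H :=
  (2 : ℝ) • (x t - z) + (3 * β t) • x' t

/-- The part of the Lyapunov function that controls both the potential gap and the anchored
momentum. -/
noncomputable def anchoredEnergy (β : ℝ → ℝ) (Φ : H → ℝ) (z : H) (x x' : ℝ → H) (t : ℝ) : ℝ :=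
  18 * β t ^ 2 * (Φ (x t) - Φ z) + ‖anchoredMomentum β z x x' t‖ ^ 2

/-- The Lyapunov function of the heavy ball equation anchored at `z`. The divisor `1 - 3 β'` makes
the cross terms `⟪x - z, x'⟫` cancel in its derivative, and by concavity of `β` differentiating it
contributes with the right sign. -/
noncomputable def heavyBallLyapunov (β β' : ℝ → ℝ) (Φ : H → ℝ) (z : H) (x x' : ℝ → H) (t : ℝ) : ℝ :=
  anchoredEnergy β Φ z x x' t / (1 - 3 * β' t) + 2 * ‖x t - z‖ ^ 2

theorem anchoredEnergy_nonneg (hz : ∀ u, Φ z ≤ Φ u) : 0 ≤ anchoredEnergy β Φ z x x' t :=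
  add_nonneg (mul_nonneg (by positivity) (sub_nonneg.2 (hz _))) (by positivity)

theorem anchoredEnergy_le_heavyBallLyapunov (hz : ∀ u, Φ z ≤ Φ u) (hβ'0 : 0 ≤ β' t)
    (hβ'1 : β' t < 1 / 3) : anchoredEnergy β Φ z x x' t ≤ heavyBallLyapunov β β' Φ z x x' t :=
  (le_div_self (anchoredEnergy_nonneg hz) (by linarith) (by linarith)).trans
    (le_add_of_nonneg_right (by positivity))

theorem norm_anchoredMomentum_le_sqrt_heavyBallLyapunov (hz : ∀ u, Φ z ≤ Φ u) (hβ'0 : 0 ≤ β' t)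
    (hβ'1 : β' t < 1 / 3) :
    ‖anchoredMomentum β z x x' t‖ ≤ √(heavyBallLyapunov β β' Φ z x x' t) :=
  Real.le_sqrt_of_sq_le <|
    (le_add_of_nonneg_left (mul_nonneg (by positivity) (sub_nonneg.2 (hz _)))).trans
      (anchoredEnergy_le_heavyBallLyapunov hz hβ'0 hβ'1)

theorem hasDerivAt_anchoredMomentum (hβ : IsConcaveInverseDamping β β' β'' T)
    (hx : IsHeavyBallTrajectory β Φ' g x x' x'' T) (ht : t ∈ Ici T) :
    HasDerivAt (anchoredMomentum β z x x')
      ((3 * β t) • (g t - Φ' (x t)) - (1 - 3 * β' t) • x' t) t := by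
  refine ((((hx.hasDerivAt t ht).sub_const z).const_smul (2 : ℝ)).add
    (((hβ.hasDerivAt t ht).const_mul 3).smul (hx.hasDerivAt_velocity t ht))).congr_deriv ?_
  rw [mul_smul 3 (β t) (x'' t), hx.smul_acceleration ht (hβ.pos t ht).ne']
  module

theorem IsHeavyBallTrajectory.integrableOn_velocity
    (hβ : IsConcaveInverseDamping β β' β'' T) (hκ : κ < 1)
    (hβ'κ : ∀ t ∈ Ici T, β' t ≤ κ) (hx : IsHeavyBallTrajectory β Φ' g x x' x'' T)
    (hg : IntegrableOn (fun t => β t * ‖g t‖) (Ioi T))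
    (hgrad : IntegrableOn (fun t => β t * ‖Φ' (x t)‖) (Ioi T)) : IntegrableOn x' (Ioi T) := by
  let ρ : ℝ → ℝ := fun t => (1 - β' t) / β t
  have hρ_mul : ∀ t ∈ Ici T, ρ t * ‖β t • x' t‖ = (1 - β' t) * ‖x' t‖ := by
    intro t ht
    rw [norm_smul, Real.norm_of_nonneg (hβ.pos t ht).le, ← mul_assoc,
      div_mul_cancel₀ _ (hβ.pos t ht).ne']
  have hderiv : ∀ t ∈ Ici T, HasDerivAt (fun s => β s • x' s)
      (β t • (g t - Φ' (x t)) - ρ t • β t • x' t) t := by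
    intro t ht
    refine ((hβ.hasDerivAt t ht).smul (hx.hasDerivAt_velocity t ht)).congr_deriv ?_
    rw [hx.smul_acceleration ht (hβ.pos t ht).ne', smul_smul, div_mul_cancel₀ _ (hβ.pos t ht).ne']
    module
  have hρ_le : ∀ t ∈ Ici T, ρ t ≤ 1 / β T := fun t ht =>
    div_le_div₀ zero_le_one (by linarith [hβ.deriv_nonneg ht]) (hβ.pos T self_mem_Ici)
      (hβ.monotoneOn self_mem_Ici ht ht)
  have hforce : ∀ t ∈ Ici T,
      ‖β t • (g t - Φ' (x t))‖ ≤ β t * ‖g t‖ + β t * ‖Φ' (x t)‖ := by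
    intro t ht
    rw [norm_smul, Real.norm_of_nonneg (hβ.pos t ht).le, ← mul_add]
    exact mul_le_mul_of_nonneg_left (norm_sub_le _ _) (hβ.pos t ht).le
  have hdamped : IntegrableOn (fun t => ρ t * ‖β t • x' t‖) (Ioi T) :=
    integrableOn_mul_norm_of_hasDerivAt_sub_smul hderiv
      ((continuousOn_const.sub (continuousOn_Ici_of_hasDerivAt hβ.hasDerivAt_deriv)).div
        hβ.continuousOn fun t ht => (hβ.pos t ht).ne')
      (fun t ht => div_nonneg (by linarith [hβ'κ t ht]) (hβ.pos t ht).le) hρ_le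
      (hg.add hgrad) hforce
  refine (hdamped.const_mul (1 - κ)⁻¹).mono'
    (((continuousOn_Ici_of_hasDerivAt hx.hasDerivAt_velocity).mono
      Ioi_subset_Ici_self).aestronglyMeasurable measurableSet_Ioi)
    (ae_restrict_of_forall_mem measurableSet_Ioi fun t ht => ?_)
  have ht' : t ∈ Ici T := Ioi_subset_Ici_self ht
  rw [hρ_mul t ht', ← div_eq_inv_mul, le_div_iff₀' (by linarith)]
  exact mul_le_mul_of_nonneg_right (by linarith [hβ'κ t ht']) (norm_nonneg _)

variable [CompleteSpace H]

theorem hasDerivAt_anchoredEnergy (hβ : IsConcaveInverseDamping β β' β'' T)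
    (hΦ : HasGradientAt Φ (Φ' (x t)) (x t)) (hx : IsHeavyBallTrajectory β Φ' g x x' x'' T)
    (ht : t ∈ Ici T) :
    HasDerivAt (anchoredEnergy β Φ z x x')
      (36 * β t * β' t * (Φ (x t) - Φ z) - 12 * β t * ⟪Φ' (x t), x t - z⟫
        + 6 * β t * ⟪anchoredMomentum β z x x' t, g t⟫
        - (1 - 3 * β' t) * (4 * ⟪x t - z, x' t⟫ + 6 * β t * ‖x' t‖ ^ 2)) t := by
  have hpotential := hasDerivAt_comp_of_hasGradientAt hΦ (hx.hasDerivAt t ht)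
  refine (((((hβ.hasDerivAt t ht).fun_pow 2).const_mul 18).mul (hpotential.sub_const (Φ z))).add
    (hasDerivAt_anchoredMomentum hβ hx ht).norm_sq).congr_deriv ?_
  simp only [anchoredMomentum, smul_sub, inner_sub_right, inner_add_left, inner_add_right,
    inner_smul_left, inner_smul_right, inner_sub_left, conj_trivial, real_inner_self_eq_norm_sq,
    real_inner_comm (Φ' (x t))]
  push_cast
  ring

theorem hasDerivAt_heavyBallLyapunov (hβ : IsConcaveInverseDamping β β' β'' T)
    (hΦ : HasGradientAt Φ (Φ' (x t)) (x t)) (hx : IsHeavyBallTrajectory β Φ' g x x' x'' T)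
    (ht : t ∈ Ici T) (hβ' : 1 - 3 * β' t ≠ 0) :
    HasDerivAt (heavyBallLyapunov β β' Φ z x x')
      ((36 * β t * β' t * (Φ (x t) - Φ z) - 12 * β t * ⟪Φ' (x t), x t - z⟫
          + 6 * β t * ⟪anchoredMomentum β z x x' t, g t⟫) / (1 - 3 * β' t)
        - 6 * β t * ‖x' t‖ ^ 2
        + 3 * β'' t * anchoredEnergy β Φ z x x' t / (1 - 3 * β' t) ^ 2) t := by
  have hdivisor := ((hβ.hasDerivAt_deriv t ht).const_mul 3).const_sub 1
  refine (((hasDerivAt_anchoredEnergy hβ hΦ hx ht).div hdivisor hβ').add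
    (((hx.hasDerivAt t ht).sub_const z).norm_sq.const_mul 2)).congr_deriv ?_
  generalize 1 - 3 * β' t = w at hβ' ⊢
  field_simp
  ring

theorem deriv_heavyBallLyapunov_le (hβ : IsConcaveInverseDamping β β' β'' T) (hκ : κ < 1 / 3)
    (hβ'κ : β' t ≤ κ) (hconv : ConvexOn ℝ univ Φ) (hΦ : HasGradientAt Φ (Φ' (x t)) (x t))
    (hx : IsHeavyBallTrajectory β Φ' g x x' x'' T) (ht : t ∈ Ici T) (hz : ∀ u, Φ z ≤ Φ u)
    (hr : r * ‖Φ' (x t)‖ ≤ ⟪Φ' (x t), x t - z⟫) :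
    deriv (heavyBallLyapunov β β' Φ z x x') t
      ≤ 6 / (1 - 3 * κ) * (β t * ‖g t‖) * √(heavyBallLyapunov β β' Φ z x x' t)
        - 12 * r * (β t * ‖Φ' (x t)‖) := by
  have hβ0 : 0 < β t := hβ.pos t ht
  have hβ'0 : 0 ≤ β' t := hβ.deriv_nonneg ht
  have hdivisor : 0 < 1 - 3 * β' t := by linarith
  have hκ' : 0 < 1 - 3 * κ := by linarith
  have hgap : Φ (x t) - Φ z ≤ ⟪Φ' (x t), x t - z⟫ :=
    sub_le_inner_of_convexOn_of_hasGradientAt hconv (mem_univ _) (mem_univ _) hΦ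
  have hpotential : 36 * β t * β' t * (Φ (x t) - Φ z) - 12 * β t * ⟪Φ' (x t), x t - z⟫
      ≤ (1 - 3 * β' t) * -(12 * r * (β t * ‖Φ' (x t)‖)) := by
    have hgap_scaled := mul_le_mul_of_nonneg_left hgap (by positivity : 0 ≤ 36 * β t * β' t)
    have hr_scaled := mul_le_mul_of_nonneg_left hr (by positivity : 0 ≤ 12 * β t * (1 - 3 * β' t))
    linarith
  have hsource : 6 * β t * ⟪anchoredMomentum β z x x' t, g t⟫ / (1 - 3 * β' t)
      ≤ 6 / (1 - 3 * κ) * (β t * ‖g t‖) * √(heavyBallLyapunov β β' Φ z x x' t) :=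
    calc 6 * β t * ⟪anchoredMomentum β z x x' t, g t⟫ / (1 - 3 * β' t)
        ≤ 6 * β t * (√(heavyBallLyapunov β β' Φ z x x' t) * ‖g t‖) / (1 - 3 * κ) := by
          gcongr
          exact (real_inner_le_norm _ _).trans <| mul_le_mul_of_nonneg_right
            (norm_anchoredMomentum_le_sqrt_heavyBallLyapunov hz hβ'0 (by linarith)) (norm_nonneg _)
      _ = _ := by ring
  have hkinetic : 0 ≤ 6 * β t * ‖x' t‖ ^ 2 := by positivity
  have hconcave : 3 * β'' t * anchoredEnergy β Φ z x x' t / (1 - 3 * β' t) ^ 2 ≤ 0 :=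
    div_nonpos_of_nonpos_of_nonneg (mul_nonpos_of_nonpos_of_nonneg
      (by linarith [hβ.deriv2_nonpos t ht]) (anchoredEnergy_nonneg hz)) (by positivity)
  rw [(hasDerivAt_heavyBallLyapunov hβ hΦ hx ht hdivisor.ne').deriv, add_div]
  have := (div_le_iff₀' hdivisor).2 hpotential
  linarith

theorem IsHeavyBallTrajectory.integrableOn_mul_norm_gradient
    (hβ : IsConcaveInverseDamping β β' β'' T) (hκ : κ < 1 / 3)
    (hβ'κ : ∀ t ∈ Ici T, β' t ≤ κ) (hconv : ConvexOn ℝ univ Φ)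
    (hΦ : ∀ u, HasGradientAt Φ (Φ' u) u) (hcont : Continuous Φ')
    (hx : IsHeavyBallTrajectory β Φ' g x x' x'' T)
    (hg : IntegrableOn (fun t => β t * ‖g t‖) (Ioi T))
    (hint : (interior {v | ∀ u, Φ v ≤ Φ u}).Nonempty) :
    IntegrableOn (fun t => β t * ‖Φ' (x t)‖) (Ioi T) := by
  obtain ⟨z, hz_int⟩ := hint
  obtain ⟨r, hr, hball⟩ :=
    Metric.nhds_basis_closedBall.mem_iff.1 (mem_interior_iff_mem_nhds.1 hz_int)
  have hz : ∀ u, Φ z ≤ Φ u := interior_subset hz_int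
  have hκ' : 0 < 1 - 3 * κ := by linarith
  have hlyapunov_deriv : ∀ t ∈ Ici T, HasDerivAt (heavyBallLyapunov β β' Φ z x x')
      (deriv (heavyBallLyapunov β β' Φ z x x') t) t := fun t ht =>
    (hasDerivAt_heavyBallLyapunov hβ (hΦ _) hx ht
      (by linarith [hβ'κ t ht] : 0 < 1 - 3 * β' t).ne').differentiableAt.hasDerivAt
  have hscaled : IntegrableOn (fun t => 12 * r * (β t * ‖Φ' (x t)‖)) (Ioi T) :=
    integrableOn_Ioi_of_hasDerivAt_le_mul_sqrt_sub hlyapunov_deriv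
      (fun t ht => (anchoredEnergy_nonneg hz).trans <|
        anchoredEnergy_le_heavyBallLyapunov hz (hβ.deriv_nonneg ht) ((hβ'κ t ht).trans_lt hκ))
      (hg.const_mul (6 / (1 - 3 * κ)))
      (fun t ht => by have := hβ.pos t ht; positivity)
      (continuousOn_const.mul (hβ.continuousOn.mul
        (hcont.comp_continuousOn (continuousOn_Ici_of_hasDerivAt hx.hasDerivAt)).norm))
      (fun t ht => by have := hβ.pos t ht; positivity)
      (fun t ht => deriv_heavyBallLyapunov_le hβ hκ (hβ'κ t ht) hconv (hΦ _) hx ht hz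
        (mul_norm_le_inner_of_closedBall_subset_argmin hconv (hΦ _) hr.le hball))
  exact (integrable_const_mul_iff (by positivity : 12 * r ≠ 0).isUnit _).1 hscaled

end HeavyBall

theorem eq_zero_of_integrableOn_Ioi_of_tendsto {E : Type*} [NormedAddCommGroup E] {f : ℝ → E}
    {a : E} {T : ℝ} (hf : IntegrableOn f (Ioi T)) (ha : Tendsto f atTop (nhds a)) : a = 0 := by
  refine IntegrableAtFilter.eq_zero_of_tendsto ⟨Ioi T, Ioi_mem_atTop T, hf⟩ (fun s hs => ?_) ha
  obtain ⟨b, hb⟩ := mem_atTop_sets.1 hs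
  exact measure_mono_top hb Real.volume_Ici

theorem heavy_ball_strong_convergence_int_nonempty_general
    {H : Type*} [NormedAddCommGroup H] [InnerProductSpace ℝ H] [CompleteSpace H]
    {β β' β'' : ℝ → ℝ} {Φ : H → ℝ} {Φ' : H → H} {g x x' x'' : ℝ → H} {T κ : ℝ}
    (hβ : IsConcaveInverseDamping β β' β'' T) (hκ : κ < 1 / 3)
    (hβ'κ : ∀ᶠ t in atTop, β' t ≤ κ)
    (hconv : ConvexOn ℝ univ Φ) (hΦ : ∀ u, HasGradientAt Φ (Φ' u) u) (hcont : Continuous Φ')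
    (hx : IsHeavyBallTrajectory β Φ' g x x' x'' T)
    (hg : IntegrableOn (fun t => β t * ‖g t‖) (Ioi T))
    (hint : (interior {v | ∀ u, Φ v ≤ Φ u}).Nonempty) :
    ∃ xstar ∈ {v | ∀ u, Φ v ≤ Φ u}, Tendsto x atTop (nhds xstar) := by
  obtain ⟨S, hS⟩ := eventually_atTop.1 (hβ'κ.and (eventually_ge_atTop T))
  have hTS : T ≤ S := (hS S le_rfl).2
  replace hβ'κ : ∀ t ∈ Ici S, β' t ≤ κ := fun t ht => (hS t ht).1
  replace hβ := hβ.mono hTS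
  replace hx := hx.mono hTS
  replace hg := hg.mono_set (Ioi_subset_Ioi hTS)
  have hgrad := hx.integrableOn_mul_norm_gradient hβ hκ hβ'κ hconv hΦ hcont hg hint
  have hvel := hx.integrableOn_velocity hβ (by linarith) hβ'κ hg hgrad
  have hlim := tendsto_limUnder_of_hasDerivAt_of_integrableOn_Ioi
    (fun t ht => hx.hasDerivAt t (Ioi_subset_Ici_self ht)) hvel
  refine ⟨limUnder atTop x, isMin_of_hasGradientAt_zero hconv ?_, hlim⟩
  have hgradx : ContinuousOn (fun t => Φ' (x t)) (Ici S) :=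
    hcont.comp_continuousOn (continuousOn_Ici_of_hasDerivAt hx.hasDerivAt)
  have hcrit : Φ' (limUnder atTop x) = 0 := eq_zero_of_integrableOn_Ioi_of_tendsto
    (hβ.integrableOn_of_mul_norm hgradx hgrad) ((hcont.tendsto _).comp hlim)
  exact hcrit ▸ hΦ _

section PowerDamping

variable {c α t : ℝ}

theorem hasDerivAt_one_add_rpow (p : ℝ) (ht : 0 ≤ t) :
    HasDerivAt (fun s : ℝ => (1 + s) ^ p) (p * (1 + t) ^ (p - 1)) t := by
  simpa using ((hasDerivAt_id t).const_add 1).rpow_const (p := p)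
    (Or.inl (by rw [id_eq]; positivity))

theorem isConcaveInverseDamping_one_add_rpow (hc : 0 < c) (hα0 : 0 ≤ α) (hα1 : α ≤ 1) :
    IsConcaveInverseDamping (fun t => (1 + t) ^ α / c) (fun t => α * (1 + t) ^ (α - 1) / c)
      (fun t => α * ((α - 1) * (1 + t) ^ (α - 1 - 1)) / c) 0 where
  pos t ht := by have : 0 ≤ t := ht; positivity
  hasDerivAt t ht := (hasDerivAt_one_add_rpow α ht).div_const c
  hasDerivAt_deriv t ht := ((hasDerivAt_one_add_rpow (α - 1) ht).const_mul α).div_const c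
  deriv2_nonpos t ht := by
    have ht0 : 0 ≤ t := ht
    exact div_nonpos_of_nonpos_of_nonneg (mul_nonpos_of_nonneg_of_nonpos hα0
      (mul_nonpos_of_nonpos_of_nonneg (by linarith) (by positivity))) hc.le

theorem tendsto_mul_one_add_rpow_sub_one_div (c : ℝ) (hα1 : α < 1) :
    Tendsto (fun t : ℝ => α * (1 + t) ^ (α - 1) / c) atTop (nhds 0) := by
  have hpow : Tendsto (fun t : ℝ => (1 + t) ^ (-(1 - α))) atTop (nhds 0) :=
    (tendsto_rpow_neg_atTop (sub_pos.2 hα1)).comp (tendsto_atTop_add_const_left _ 1 tendsto_id)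
  simpa only [neg_sub, mul_zero, zero_div] using (hpow.const_mul α).div_const c

end PowerDamping

theorem heavy_ball_strong_convergence_int_nonempty
    {H : Type*} [NormedAddCommGroup H] [InnerProductSpace ℝ H] [CompleteSpace H]
    (c α : ℝ) (hc : 0 < c) (hα0 : 0 ≤ α) (hα1 : α < 1)
    (Φ : H → ℝ) (Φ' : H → H) (Φstar : ℝ)
    (hΦconv : ConvexOn ℝ Set.univ Φ)
    (hΦdiff : ∀ u : H, HasGradientAt Φ (Φ' u) u)
    (hΦcont : Continuous Φ')
    (hargmin : {v : H | ∀ u, Φ v ≤ Φ u}.Nonempty)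
    (hΦstar : ∀ v ∈ {v : H | ∀ u, Φ v ≤ Φ u}, Φ v = Φstar)
    (g : ℝ → H) (hg : IntegrableOn g (Ici (0:ℝ)))
    (x x' x'' : ℝ → H)
    (hx1 : ∀ t ∈ Ici (0:ℝ), HasDerivAt x (x' t) t)
    (hx2 : ∀ t ∈ Ici (0:ℝ), HasDerivAt x' (x'' t) t)
    (hode : ∀ t ∈ Ici (0:ℝ),
      x'' t + (c / (1 + t) ^ α) • x' t + Φ' (x t) = g t)
    (hgα : IntegrableOn (fun t => (1 + t) ^ α * ‖g t‖) (Ici (0:ℝ)))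
    (hint : (interior {v : H | ∀ u, Φ v ≤ Φ u}).Nonempty) :
    ∃ xstar ∈ {v : H | ∀ u, Φ v ≤ Φ u}, Tendsto x atTop (nhds xstar) := by
  have hx : IsHeavyBallTrajectory (fun t => (1 + t) ^ α / c) Φ' g x x' x'' 0 :=
    ⟨hx1, hx2, fun t ht => by simpa only [inv_div] using hode t ht⟩
  have hsource : IntegrableOn (fun t => (1 + t) ^ α / c * ‖g t‖) (Ioi 0) := by
    simp only [div_mul_eq_mul_div]
    exact (hgα.mono_set Ioi_subset_Ici_self).div_const c
  exact heavy_ball_strong_convergence_int_nonempty_general (κ := 1 / 4)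
    (isConcaveInverseDamping_one_add_rpow hc hα0 hα1.le) (by norm_num)
    ((tendsto_mul_one_add_rpow_sub_one_div c hα1).eventually_le_const (by norm_num))
    hΦconv hΦdiff hΦcont hx hsource hint
end

section
/- (Gronwall–Bellman lemma) Let f ∈ L¹([a,b], ℝ₊) be a nonnegative integrable function, let c ≥ 0 be a constant, and let w : [a,b] → ℝ be continuous and satisfy ½ w(t)² ≤ ½ c² + ∫_a^t f(s) w(s) ds for all t ∈ [a,b]. Then w(t) ≤ c + ∫_a^t f(s) ds for all t ∈ [a,b]. -/
open MeasureTheory Filter Real Set RealInnerProductSpace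

/-!
Write `F t = ∫ s in a..t, f s` and `V t = c ^ 2 + 2 * ∫ s in a..t, f s * w s`, so that `w ^ 2 ≤ V`.
For `k > c` the function `U = (k + F) ^ 2` solves `U' = 2 f √U` and `U a = k ^ 2 > V a`, whereas
`V' = 2 f w ≤ 2 f √V`. Hence `V` cannot reach `U`: as long as `V < U` we have `w ≤ k + F`, and
integrating `f w ≤ f (k + F)` up to the first contact would give `V ≤ U - (k ^ 2 - c ^ 2)` there.
Thus `w ≤ k + F` everywhere, and it remains to let `k` decrease to `c`.
-/

theorem forall_lt_of_forall_Ico_lt {α β : Type*} [LinearOrder α] [TopologicalSpace α]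
    [OrderClosedTopology α] [CompactIccSpace α] [LinearOrder β] [TopologicalSpace β]
    [OrderClosedTopology β] {a b : α} {u v : α → β}
    (hu : ContinuousOn u (Icc a b)) (hv : ContinuousOn v (Icc a b))
    (step : ∀ r ∈ Icc a b, (∀ s ∈ Ico a r, u s < v s) → u r < v r) :
    ∀ t ∈ Icc a b, u t < v t := by
  by_contra! ⟨t, ht, hvu⟩
  have hcompact : IsCompact {r ∈ Icc a b | v r ≤ u r} :=
    isCompact_Icc.of_isClosed_subset (isClosed_Icc.isClosed_le hv hu) (sep_subset _ _)
  obtain ⟨r, ⟨hr, hvur⟩, hr_least⟩ := hcompact.exists_isLeast ⟨t, ht, hvu⟩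
  refine (step r hr fun s hs ↦ ?_).not_ge hvur
  by_contra! hvus
  exact (hr_least ⟨⟨hs.1, hs.2.le.trans hr.2⟩, hvus⟩).not_gt hs.2

theorem integral_deriv_mul_self_of_ae_hasDerivAt {a b : ℝ} {u u' : ℝ → ℝ}
    (hu : AbsolutelyContinuousOnInterval u a b)
    (hderiv : ∀ᵐ x, x ∈ uIoc a b → HasDerivAt u (u' x) x) :
    ∫ x in a..b, u' x * u x = (u b ^ 2 - u a ^ 2) / 2 := by
  calc ∫ x in a..b, u' x * u x
      = ∫ x in a..b, (deriv u x * u x + u x * deriv u x) / 2 := by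
        refine intervalIntegral.integral_congr_ae ?_
        filter_upwards [hderiv] with x hx hxab
        rw [(hx hxab).deriv]
        ring
    _ = (u b ^ 2 - u a ^ 2) / 2 := by
        rw [intervalIntegral.integral_div, hu.integral_deriv_mul_eq_sub hu]
        ring

theorem integral_mul_const_add_integral {a b : ℝ} {f : ℝ → ℝ}
    (hf : IntervalIntegrable f volume a b) (k : ℝ) :
    ∫ s in a..b, f s * (k + ∫ x in a..s, f x) = ((k + ∫ x in a..b, f x) ^ 2 - k ^ 2) / 2 := by
  have hac : AbsolutelyContinuousOnInterval (fun s ↦ k + ∫ x in a..s, f x) a b :=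
    contDiffOn_const.absolutelyContinuousOnInterval.add
      (hf.absolutelyContinuousOnInterval_intervalIntegral left_mem_uIcc)
  have hderiv : ∀ᵐ s, s ∈ uIoc a b → HasDerivAt (fun s ↦ k + ∫ x in a..s, f x) (f s) s := by
    filter_upwards [hf.ae_hasDerivAt_integral] with s hs hsab
    exact (hs (uIoc_subset_uIcc hsab) a left_mem_uIcc).const_add k
  simpa using integral_deriv_mul_self_of_ae_hasDerivAt hac hderiv

theorem integral_mul_le_of_le_const_add_integral {a b k : ℝ} {f w : ℝ → ℝ} (hab : a ≤ b)
    (hf0 : ∀ᵐ s ∂volume.restrict (Icc a b), 0 ≤ f s) (hf : IntervalIntegrable f volume a b)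
    (hfw : IntervalIntegrable (fun s ↦ f s * w s) volume a b)
    (hw : ∀ᵐ s ∂volume.restrict (Icc a b), w s ≤ k + ∫ x in a..s, f x) :
    ∫ s in a..b, f s * w s ≤ ((k + ∫ x in a..b, f x) ^ 2 - k ^ 2) / 2 := by
  have hF : ContinuousOn (fun s ↦ ∫ x in a..s, f x) (uIcc a b) :=
    intervalIntegral.continuousOn_primitive_interval' hf left_mem_uIcc
  rw [← integral_mul_const_add_integral hf k]
  refine intervalIntegral.integral_mono_ae_restrict hab hfw
    (hf.mul_continuousOn (continuousOn_const.add hF)) ?_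
  filter_upwards [hf0, hw] with s hfs hws
  exact mul_le_mul_of_nonneg_left hws hfs

theorem intervalIntegrable_of_mem_Icc {E : Type*} [NormedAddCommGroup E] {μ : Measure ℝ}
    {a b t : ℝ} {g : ℝ → E} (hg : IntegrableOn g (Icc a b) μ) (ht : t ∈ Icc a b) :
    IntervalIntegrable g μ a t := by
  refine IntegrableOn.intervalIntegrable ?_
  rw [uIcc_of_le ht.1]
  exact hg.mono_set (Icc_subset_Icc_right ht.2)

theorem continuousOn_integral_Icc {E : Type*} [NormedAddCommGroup E] [NormedSpace ℝ E]
    {μ : Measure ℝ} [NullSingletonClass μ] {a b : ℝ} {g : ℝ → E}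
    (hg : IntegrableOn g (Icc a b) μ) : ContinuousOn (fun t ↦ ∫ s in a..t, g s ∂μ) (Icc a b) :=
  (intervalIntegral.continuousOn_primitive hg).congr fun _ ht ↦
    intervalIntegral.integral_of_le ht.1

section GronwallBellman

variable {a b c : ℝ} {f w : ℝ → ℝ}

theorem lt_const_add_integral_of_sq_le {k : ℝ}
    (hf0 : ∀ᵐ s ∂volume.restrict (Icc a b), 0 ≤ f s) (hf : IntegrableOn f (Icc a b))
    (hfw : IntegrableOn (fun s ↦ f s * w s) (Icc a b)) (hc : 0 ≤ c) (hck : c < k)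
    (hineq : ∀ t ∈ Icc a b, w t ^ 2 / 2 ≤ c ^ 2 / 2 + ∫ s in a..t, f s * w s) :
    ∀ t ∈ Icc a b, w t < k + ∫ s in a..t, f s := by
  have hf0_left : ∀ t ∈ Icc a b, ∀ᵐ s ∂volume.restrict (Icc a t), 0 ≤ f s := fun t ht ↦
    ae_restrict_of_ae_restrict_of_subset (Icc_subset_Icc_right ht.2) hf0
  have lt_of_energy_lt : ∀ t ∈ Icc a b,
      c ^ 2 / 2 + ∫ s in a..t, f s * w s < (k + ∫ s in a..t, f s) ^ 2 / 2 →
        w t < k + ∫ s in a..t, f s := by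
    intro t ht henergy
    have hF0 : 0 ≤ ∫ s in a..t, f s :=
      intervalIntegral.integral_nonneg_of_ae_restrict ht.1 (hf0_left t ht)
    exact lt_of_pow_lt_pow_left₀ 2 (by linarith) (by linarith [hineq t ht])
  suffices henergy : ∀ t ∈ Icc a b,
      c ^ 2 / 2 + ∫ s in a..t, f s * w s < (k + ∫ s in a..t, f s) ^ 2 / 2 from
    fun t ht ↦ lt_of_energy_lt t ht (henergy t ht)
  refine forall_lt_of_forall_Ico_lt (continuousOn_const.add (continuousOn_integral_Icc hfw))
    (((continuousOn_const.add (continuousOn_integral_Icc hf)).pow 2).div_const 2) ?_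
  intro r hr henergy
  have hw : ∀ᵐ s ∂volume.restrict (Icc a r), w s ≤ k + ∫ x in a..s, f x := by
    rw [← restrict_Ico_eq_restrict_Icc]
    refine ae_restrict_of_forall_mem measurableSet_Ico fun s hs ↦ ?_
    exact (lt_of_energy_lt s ⟨hs.1, hs.2.le.trans hr.2⟩ (henergy s hs)).le
  have hint : ∫ s in a..r, f s * w s ≤ ((k + ∫ x in a..r, f x) ^ 2 - k ^ 2) / 2 :=
    integral_mul_le_of_le_const_add_integral hr.1 (hf0_left r hr)
      (intervalIntegrable_of_mem_Icc hf hr) (intervalIntegrable_of_mem_Icc hfw hr) hw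
  have hsq : c ^ 2 < k ^ 2 := by gcongr
  linarith

theorem gronwall_bellman_general
    (hf0 : ∀ᵐ s ∂volume.restrict (Icc a b), 0 ≤ f s) (hf : IntegrableOn f (Icc a b))
    (hfw : IntegrableOn (fun s ↦ f s * w s) (Icc a b)) (hc : 0 ≤ c)
    (hineq : ∀ t ∈ Icc a b, w t ^ 2 / 2 ≤ c ^ 2 / 2 + ∫ s in a..t, f s * w s) :
    ∀ t ∈ Icc a b, w t ≤ c + ∫ s in a..t, f s := by
  intro t ht
  rw [← sub_le_iff_le_add]
  refine le_of_forall_gt_imp_ge_of_dense fun k hck ↦ ?_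
  rw [sub_le_iff_le_add]
  exact (lt_const_add_integral_of_sq_le hf0 hf hfw hc hck hineq t ht).le

end GronwallBellman

theorem gronwall_bellman
    (a b : ℝ) (hab : a < b)
    (f : ℝ → ℝ) (hf0 : ∀ t ∈ Icc a b, 0 ≤ f t)
    (hfint : IntegrableOn f (Icc a b))
    (c : ℝ) (hc : 0 ≤ c)
    (w : ℝ → ℝ) (hw : ContinuousOn w (Icc a b))
    (hineq : ∀ t ∈ Icc a b,
      w t ^ 2 / 2 ≤ c ^ 2 / 2 + ∫ s in a..t, f s * w s) :
    ∀ t ∈ Icc a b, w t ≤ c + ∫ s in a..t, f s :=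
  gronwall_bellman_general (ae_restrict_of_forall_mem measurableSet_Icc hf0) hfint
    (hfint.mul_continuousOn hw isCompact_Icc) hc hineq
end

section
/- Let ω : [0,∞) → H be measurable with ∫₀^∞ (1/γ(t)) ‖ω(t)‖ dt < ∞. If y ∈ W²,¹_loc(0,∞;H) solves the differential equation y''(t) + γ(t) y'(t) = ω(t) for t ≥ 0, then y(t) converges strongly in H (i.e. in norm) as t → +∞. -/
open MeasureTheory Filter Real Set RealInnerProductSpace

/-!
Let `Γ` be a primitive of `γ`, so that `z = exp Γ • y'` satisfies `z' = exp Γ • ω`, and let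
`w t = ∫ s in Ioi t, exp (-Γ s)`. Since `w' • z = -y'`, integrating by parts gives
`(y + w • z)' = w • z' = (w * exp Γ) • ω`. If `(1 / γ)' ≤ θ < 1` near infinity, then
`(exp (-Γ) / γ)' ≤ -(1 - θ) * exp (-Γ)`, whence `w * exp Γ ≤ 1 / ((1 - θ) * γ)`. Therefore `w • z'`
is integrable and `y + w • z` converges; moreover `w • z` tends to `0` by an integral form of
Kronecker's lemma.
-/

open scoped Topology

section Nonneg

variable {f g g' : ℝ → ℝ} {a : ℝ}

lemma intervalIntegral_le_of_hasDerivAt_le_neg (hf : ContinuousOn f (Ici a))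
    (hg : ∀ t ∈ Ici a, HasDerivAt g (g' t) t) (hg' : ∀ t ∈ Ici a, g' t ≤ -f t)
    (hg0 : ∀ t ∈ Ici a, 0 ≤ g t) {b : ℝ} (hab : a ≤ b) : ∫ t in a..b, f t ≤ g a := by
  have growth : g b - g a ≤ ∫ t in a..b, -f t :=
    intervalIntegral.sub_le_integral_of_hasDeriv_right_of_le hab
      (fun t ht => (hg t ht.1).continuousAt.continuousWithinAt)
      (fun t ht => (hg t ht.1.le).hasDerivWithinAt)
      (hf.mono Icc_subset_Ici_self).neg.integrableOn_Icc
      (fun t ht => hg' t ht.1.le)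
  rw [intervalIntegral.integral_neg] at growth
  linarith [hg0 b hab]

lemma integrableOn_Ioi_of_hasDerivAt_le_neg (hf : ContinuousOn f (Ici a))
    (hf0 : ∀ t ∈ Ici a, 0 ≤ f t) (hg : ∀ t ∈ Ici a, HasDerivAt g (g' t) t)
    (hg' : ∀ t ∈ Ici a, g' t ≤ -f t) (hg0 : ∀ t ∈ Ici a, 0 ≤ g t) : IntegrableOn f (Ioi a) := by
  refine integrableOn_Ioi_of_intervalIntegral_norm_bounded (b := id) (g a) a
    (fun b => (hf.mono Icc_subset_Ici_self).integrableOn_Icc.mono_set Ioc_subset_Icc_self)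
    tendsto_id ?_
  filter_upwards [eventually_ge_atTop a] with b hab
  refine intervalIntegral_le_of_hasDerivAt_le_neg hf.norm hg (fun t ht => ?_) hg0 hab
  rw [norm_of_nonneg (hf0 t ht)]
  exact hg' t ht

lemma integral_Ioi_le_of_hasDerivAt_le_neg (hf : ContinuousOn f (Ici a))
    (hf0 : ∀ t ∈ Ici a, 0 ≤ f t) (hg : ∀ t ∈ Ici a, HasDerivAt g (g' t) t)
    (hg' : ∀ t ∈ Ici a, g' t ≤ -f t) (hg0 : ∀ t ∈ Ici a, 0 ≤ g t) : ∫ t in Ioi a, f t ≤ g a :=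
  le_of_tendsto
    (intervalIntegral_tendsto_integral_Ioi a
      (integrableOn_Ioi_of_hasDerivAt_le_neg hf hf0 hg hg' hg0) tendsto_id)
    ((eventually_ge_atTop a).mono fun _ => intervalIntegral_le_of_hasDerivAt_le_neg hf hg hg' hg0)

end Nonneg

section AtTop

variable {E : Type*} [NormedAddCommGroup E]

lemma exists_integrableOn_Ioi_of_integrableAtFilter_atTop {X : Type*} [LinearOrder X]
    [Nonempty X] [MeasurableSpace X] {μ : Measure X} {f : X → E}
    (hf : IntegrableAtFilter f atTop μ) : ∃ a, IntegrableOn f (Ioi a) μ := by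
  obtain ⟨s, hs, hfs⟩ := hf
  obtain ⟨a, ha⟩ := mem_atTop_sets.1 hs
  exact ⟨a, hfs.mono_set fun t ht => ha t (mem_Ioi.1 ht).le⟩

variable [NormedSpace ℝ E]

lemma norm_smul_le_norm_smul_of_antitoneOn {w : ℝ → ℝ} {a s t : ℝ} (hw : AntitoneOn w (Ici a))
    (hw0 : Tendsto w atTop (𝓝 0)) (hs : a ≤ s) (hst : s ≤ t) (x : E) :
    ‖w t • x‖ ≤ ‖w s • x‖ := by
  have ht : a ≤ t := hs.trans hst
  have hwt : 0 ≤ w t :=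
    le_of_tendsto hw0 <| (eventually_ge_atTop t).mono fun r hr => hw ht (ht.trans hr) hr
  have hwst : w t ≤ w s := hw hs ht hst
  rw [norm_smul, norm_smul, norm_of_nonneg hwt, norm_of_nonneg (hwt.trans hwst)]
  gcongr

variable [CompleteSpace E] {w : ℝ → ℝ} {f f' : ℝ → E}

lemma aestronglyMeasurable_of_hasDerivAt {s : Set ℝ}
    {μ : Measure ℝ} (hs : MeasurableSet s) (hf : ∀ t ∈ s, HasDerivAt f (f' t) t) :
    AEStronglyMeasurable f' (μ.restrict s) :=
  (aestronglyMeasurable_deriv f _).congr <|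
    (ae_restrict_mem hs).mono fun t ht => (hf t ht).deriv

lemma exists_eventually_hasDerivAt_of_continuousAt
    (hf : ∀ᶠ t in atTop, ContinuousAt f t) : ∃ F : ℝ → E, ∀ᶠ t in atTop, HasDerivAt F (f t) t := by
  obtain ⟨a, ha⟩ := eventually_atTop.1 hf
  have hcont : ContinuousOn f (Ici a) := fun t ht => (ha t ht).continuousWithinAt
  refine ⟨fun t => ∫ s in a..t, f s, (eventually_gt_atTop a).mono fun t hat => ?_⟩
  exact intervalIntegral.integral_hasDerivAt_right
    ((hcont.mono Icc_subset_Ici_self).intervalIntegrable_of_Icc hat.le)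
    ⟨Ici a, Ici_mem_nhds hat, hcont.aestronglyMeasurable measurableSet_Ici⟩ (ha t hat.le)

lemma eventually_hasDerivAt_integral_Ioi
    (hf : IntegrableAtFilter f atTop) (hcont : ∀ᶠ t in atTop, ContinuousAt f t) :
    ∀ᶠ t in atTop, HasDerivAt (fun x => ∫ s in Ioi x, f s) (-f t) t := by
  obtain ⟨a, hfa⟩ := exists_integrableOn_Ioi_of_integrableAtFilter_atTop hf
  filter_upwards [eventually_gt_atTop a, hcont] with t hat htcont
  have hprimitive : HasDerivAt (fun x => ∫ s in a..x, f s) (f t) t :=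
    intervalIntegral.integral_hasDerivAt_right
      ((intervalIntegrable_iff_integrableOn_Ioc_of_le hat.le).2 <|
        hfa.mono_set Ioc_subset_Ioi_self)
      ⟨Ioi a, Ioi_mem_nhds hat, hfa.aestronglyMeasurable⟩ htcont
  refine (hprimitive.const_sub (∫ s in Ioi a, f s)).congr_of_eventuallyEq ?_
  filter_upwards [Ioi_mem_nhds hat] with x hax
  rw [← intervalIntegral.integral_Ioi_sub_Ioi hfa (mem_Ioi.1 hax).le, sub_sub_cancel]

lemma integral_Ioi_indicator_Ioc_of_hasDerivAt {a b : ℝ} (hab : a ≤ b)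
    (hf : ∀ t ∈ Icc a b, HasDerivAt f (f' t) t)
    (hint : IntegrableOn ((Ioc a b).indicator f') (Ioi a)) :
    ∫ t in Ioi a, (Ioc a b).indicator f' t = f b - f a := by
  have hinter : Ioi a ∩ Ioc a b = Ioc a b := inter_eq_right.2 Ioc_subset_Ioi_self
  have hint' : IntegrableOn f' (Ioc a b) := by
    rwa [integrableOn_indicator_iff measurableSet_Ioc, inter_comm, hinter] at hint
  rw [setIntegral_indicator measurableSet_Ioc, hinter, ← intervalIntegral.integral_of_le hab]
  refine intervalIntegral.integral_eq_sub_of_hasDerivAt (uIcc_of_le hab ▸ hf) ?_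
  rwa [intervalIntegrable_iff_integrableOn_Ioc_of_le hab]

lemma integrableAtFilter_smul_of_hasDerivAt_of_norm_le {g : ℝ → ℝ}
    (hw : ∀ᶠ t in atTop, ContinuousAt w t) (hf : ∀ᶠ t in atTop, HasDerivAt f (f' t) t)
    (hg : IntegrableAtFilter g atTop) (hle : ∀ᶠ t in atTop, ‖w t • f' t‖ ≤ g t) :
    IntegrableAtFilter (fun t => w t • f' t) atTop := by
  obtain ⟨b, hgb⟩ := exists_integrableOn_Ioi_of_integrableAtFilter_atTop hg
  obtain ⟨a, ha⟩ := eventually_atTop.1 <| hw.and <| hf.and <| hle.and <| eventually_ge_atTop b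
  choose hw hf hle hba using ha
  have hmeas : AEStronglyMeasurable (fun t => w t • f' t) (volume.restrict (Ioi a)) :=
    (ContinuousOn.aestronglyMeasurable
        (fun t ht => (hw t (le_of_lt ht)).continuousWithinAt) measurableSet_Ioi).smul
      (aestronglyMeasurable_of_hasDerivAt measurableSet_Ioi fun t ht => hf t (le_of_lt ht))
  exact ⟨Ioi a, Ioi_mem_atTop a,
    (hgb.mono_set (Ioi_subset_Ioi (hba a le_rfl))).mono' hmeas <|
      (ae_restrict_mem measurableSet_Ioi).mono fun t ht => hle t (le_of_lt ht)⟩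

lemma tendsto_smul_zero_of_integrableOn_smul_deriv {a : ℝ} (hw : AntitoneOn w (Ici a))
    (hw0 : Tendsto w atTop (𝓝 0)) (hf : ∀ t ∈ Ici a, HasDerivAt f (f' t) t)
    (hint : IntegrableOn (fun t => w t • f' t) (Ioi a)) :
    Tendsto (fun t => w t • f t) atTop (𝓝 0) := by
  -- The increment `w t • (f t - f a)` is the integral over `Ioi a` of `φ t`, which is dominated by
  -- an integrable function because `w` decreases.
  let φ : ℝ → ℝ → E := fun t => (Ioc a t).indicator fun s => w t • f' s
  have hmeas (t : ℝ) : AEStronglyMeasurable (φ t) (volume.restrict (Ioi a)) :=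
    ((aestronglyMeasurable_of_hasDerivAt measurableSet_Ioi
      fun s hs => hf s (mem_Ioi.1 hs).le).const_smul (w t)).indicator measurableSet_Ioc
  have hbound (t s : ℝ) : ‖φ t s‖ ≤ ‖w s • f' s‖ := by
    by_cases hs : s ∈ Ioc a t
    · simpa only [φ, indicator_of_mem hs]
        using norm_smul_le_norm_smul_of_antitoneOn hw hw0 hs.1.le hs.2 _
    · simp only [φ, indicator_of_notMem hs, norm_zero, norm_nonneg]
  have hlim : Tendsto (fun t => ∫ s in Ioi a, φ t s) atTop (𝓝 (∫ _ in Ioi a, (0 : E))) := by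
    refine tendsto_integral_filter_of_dominated_convergence _ (.of_forall hmeas)
      (.of_forall fun t => .of_forall (hbound t)) hint.norm ?_
    refine (ae_restrict_mem measurableSet_Ioi).mono fun s hs => ?_
    refine Tendsto.congr' ?_ (zero_smul ℝ (f' s) ▸ hw0.smul_const (f' s))
    filter_upwards [eventually_ge_atTop s] with t hst
    simp only [φ, indicator_of_mem (show s ∈ Ioc a t from ⟨hs, hst⟩)]
  have hftc : ∀ᶠ t in atTop, w t • f a + ∫ s in Ioi a, φ t s = w t • f t := by
    filter_upwards [eventually_ge_atTop a] with t hat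
    have hderiv (s : ℝ) (hs : s ∈ Icc a t) := (hf s hs.1).fun_const_smul (w t)
    rw [integral_Ioi_indicator_Ioc_of_hasDerivAt hat hderiv
      (hint.norm.mono' (hmeas t) (.of_forall (hbound t))), add_sub_cancel]
  simpa using ((hw0.smul_const (f a)).add hlim).congr' hftc

lemma exists_tendsto_of_hasDerivAt_smul {φ : ℝ → ℝ} {y : ℝ → E}
    (hw : ∀ᶠ t in atTop, HasDerivAt w (-φ t) t) (hφ : ∀ᶠ t in atTop, 0 ≤ φ t)
    (hw0 : Tendsto w atTop (𝓝 0)) (hf : ∀ᶠ t in atTop, HasDerivAt f (f' t) t)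
    (hint : IntegrableAtFilter (fun t => w t • f' t) atTop)
    (hy : ∀ᶠ t in atTop, HasDerivAt y (φ t • f t) t) : ∃ l, Tendsto y atTop (𝓝 l) := by
  obtain ⟨b, hint⟩ := exists_integrableOn_Ioi_of_integrableAtFilter_atTop hint
  obtain ⟨a, ha⟩ := eventually_atTop.1 <|
    hw.and <| hφ.and <| hf.and <| hy.and <| eventually_ge_atTop b
  choose hw hφ hf hy hba using ha
  replace hint := hint.mono_set (Ioi_subset_Ioi (hba a le_rfl))
  have hanti : AntitoneOn w (Ici a) :=
    antitoneOn_of_hasDerivWithinAt_nonpos (convex_Ici a)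
      (fun t ht => (hw t ht).continuousAt.continuousWithinAt)
      (fun t ht => (hw t (interior_subset ht)).hasDerivWithinAt)
      (fun t ht => neg_nonpos.2 (hφ t (interior_subset ht)))
  have hderiv (t : ℝ) (ht : t ∈ Ioi a) : HasDerivAt (fun t => y t + w t • f t) (w t • f' t) t :=
    have hat : a ≤ t := (mem_Ioi.1 ht).le
    ((hy t hat).fun_add ((hw t hat).fun_smul (hf t hat))).congr_deriv (by module)
  have hsum := tendsto_limUnder_of_hasDerivAt_of_integrableOn_Ioi hderiv hint
  have hzero := tendsto_smul_zero_of_integrableOn_smul_deriv hanti hw0 hf hint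
  exact ⟨_, (hsum.sub hzero).congr fun t => add_sub_cancel_right _ _⟩

end AtTop

section Damping

variable {γ Γ : ℝ → ℝ}

lemma hasDerivAt_inv_mul_exp_neg {μ' t : ℝ} (hγ : γ t ≠ 0)
    (hμ : HasDerivAt (fun s => (γ s)⁻¹) μ' t) (hΓ : HasDerivAt Γ (γ t) t) :
    HasDerivAt (fun s => (γ s)⁻¹ * exp (-Γ s)) (-((1 - μ') * exp (-Γ t))) t := by
  refine (hμ.fun_mul hΓ.fun_neg.exp).congr_deriv ?_
  field_simp
  ring

lemma eventually_integrableOn_and_integral_Ioi_exp_neg_le {μ' : ℝ → ℝ} {θ : ℝ} (hθ : θ < 1)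
    (hγ : ∀ᶠ t in atTop, 0 < γ t) (hμ : ∀ᶠ t in atTop, HasDerivAt (fun s => (γ s)⁻¹) (μ' t) t)
    (hμ' : ∀ᶠ t in atTop, μ' t ≤ θ) (hΓ : ∀ᶠ t in atTop, HasDerivAt Γ (γ t) t) :
    ∀ᶠ t in atTop, IntegrableOn (fun s => exp (-Γ s)) (Ioi t) ∧
      (∫ s in Ioi t, exp (-Γ s)) * exp (Γ t) ≤ (1 - θ)⁻¹ * (γ t)⁻¹ := by
  have hθ' : 0 < 1 - θ := sub_pos.2 hθ
  obtain ⟨a, ha⟩ := eventually_atTop.1 <| hγ.and <| hμ.and <| hμ'.and hΓ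
  choose hγ hμ hμ' hΓ using ha
  filter_upwards [eventually_ge_atTop a] with t hat
  have hle (s : ℝ) (hs : t ≤ s) : a ≤ s := hat.trans hs
  have hcont : ContinuousOn (fun s => (1 - θ) * exp (-Γ s)) (Ici t) := fun s hs =>
    ((hΓ s (hle s hs)).continuousAt.neg.rexp.const_mul (1 - θ)).continuousWithinAt
  have hpos (s : ℝ) (_ : s ∈ Ici t) : 0 ≤ (1 - θ) * exp (-Γ s) := by positivity
  have hderiv (s : ℝ) (hs : s ∈ Ici t) :=
    hasDerivAt_inv_mul_exp_neg (hγ s (hle s hs)).ne' (hμ s (hle s hs)) (hΓ s (hle s hs))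
  have hdecay (s : ℝ) (hs : s ∈ Ici t) :
      -((1 - μ' s) * exp (-Γ s)) ≤ -((1 - θ) * exp (-Γ s)) := by
    gcongr
    exact hμ' s (hle s hs)
  have hnonneg (s : ℝ) (hs : s ∈ Ici t) : 0 ≤ (γ s)⁻¹ * exp (-Γ s) := by
    have := hγ s (hle s hs)
    positivity
  constructor
  · exact (integrable_const_mul_iff hθ'.ne'.isUnit _).1 <|
      integrableOn_Ioi_of_hasDerivAt_le_neg hcont hpos hderiv hdecay hnonneg
  · have htail := integral_Ioi_le_of_hasDerivAt_le_neg hcont hpos hderiv hdecay hnonneg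
    rw [integral_const_mul, exp_neg (Γ t)] at htail
    rwa [← div_eq_inv_mul, le_div_iff₀' hθ', ← mul_assoc, ← le_mul_inv_iff₀ (exp_pos _)]

variable {E : Type*} [NormedAddCommGroup E] [NormedSpace ℝ E]

lemma hasDerivAt_exp_smul {v : ℝ → E} {v' : E} {Γ' t : ℝ} (hΓ : HasDerivAt Γ Γ' t)
    (hv : HasDerivAt v v' t) :
    HasDerivAt (fun s => exp (Γ s) • v s) (exp (Γ t) • (v' + Γ' • v t)) t :=
  (hΓ.exp.fun_smul hv).congr_deriv (by module)

lemma exists_tendsto_of_linear_ode_of_integral_Ioi_exp_neg_le [CompleteSpace E] {g : ℝ → ℝ}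
    {ω y y' y'' : ℝ → E} (hΓ : ∀ᶠ t in atTop, HasDerivAt Γ (γ t) t)
    (hexp : IntegrableAtFilter (fun t => exp (-Γ t)) atTop) (hg : IntegrableAtFilter g atTop)
    (hle : ∀ᶠ t in atTop, (∫ s in Ioi t, exp (-Γ s)) * exp (Γ t) * ‖ω t‖ ≤ g t)
    (hy : ∀ᶠ t in atTop, HasDerivAt y (y' t) t) (hy' : ∀ᶠ t in atTop, HasDerivAt y' (y'' t) t)
    (hode : ∀ᶠ t in atTop, y'' t + γ t • y' t = ω t) : ∃ l, Tendsto y atTop (𝓝 l) := by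
  let w : ℝ → ℝ := fun t => ∫ s in Ioi t, exp (-Γ s)
  have hw : ∀ᶠ t in atTop, HasDerivAt w (-exp (-Γ t)) t :=
    eventually_hasDerivAt_integral_Ioi hexp <| hΓ.mono fun t ht => ht.continuousAt.neg.rexp
  have hz : ∀ᶠ t in atTop, HasDerivAt (fun s => exp (Γ s) • y' s) (exp (Γ t) • ω t) t := by
    filter_upwards [hΓ, hy', hode] with t hΓt hy't hodet
    exact hodet ▸ hasDerivAt_exp_smul hΓt hy't
  have hbound : ∀ᶠ t in atTop, ‖w t • exp (Γ t) • ω t‖ ≤ g t := by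
    filter_upwards [hle] with t ht
    have hwt : 0 ≤ w t := integral_nonneg fun s => (exp_pos _).le
    rwa [norm_smul, norm_smul, norm_of_nonneg hwt, norm_of_nonneg (exp_pos _).le, ← mul_assoc]
  have hint := integrableAtFilter_smul_of_hasDerivAt_of_norm_le
    (hw.mono fun t ht => ht.continuousAt) hz hg hbound
  refine exists_tendsto_of_hasDerivAt_smul hw (.of_forall fun t => (exp_pos _).le)
    (tendsto_integral_Ioi_zero tendsto_id) hz hint (hy.mono fun t ht => ?_)
  rwa [smul_smul, ← exp_add, neg_add_cancel, exp_zero, one_smul]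

end Damping

section PowerDamping

variable {α : ℝ} (c : ℝ)

lemma hasDerivAt_inv_div_one_add_rpow {t : ℝ} (ht : -1 < t) :
    HasDerivAt (fun s : ℝ => (c / (1 + s) ^ α)⁻¹) (α * (1 + t) ^ (α - 1) / c) t := by
  have hpow : HasDerivAt (fun s : ℝ => (1 + s) ^ α) (1 * α * (1 + t) ^ (α - 1)) t :=
    ((hasDerivAt_id t).const_add 1).rpow_const (.inl (by simp only [id]; linarith))
  simpa only [inv_div, one_mul] using hpow.div_const c

lemma tendsto_mul_one_add_rpow_sub_one_div_zero (hα : α < 1) :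
    Tendsto (fun t : ℝ => α * (1 + t) ^ (α - 1) / c) atTop (𝓝 0) := by
  have hpow : Tendsto (fun t : ℝ => (1 + t) ^ (-(1 - α))) atTop (𝓝 0) :=
    (tendsto_rpow_neg_atTop (sub_pos.2 hα)).comp (tendsto_atTop_add_const_left _ 1 tendsto_id)
  simpa only [neg_sub, mul_zero, zero_div] using (hpow.const_mul α).div_const c

end PowerDamping

theorem linear_ode_strong_convergence_general
    {E : Type*} [NormedAddCommGroup E] [NormedSpace ℝ E] [CompleteSpace E]
    {γ μ' : ℝ → ℝ} {θ : ℝ} (hθ : θ < 1) (hγ : ∀ᶠ t in atTop, 0 < γ t)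
    (hμ : ∀ᶠ t in atTop, HasDerivAt (fun s => (γ s)⁻¹) (μ' t) t) (hμ' : ∀ᶠ t in atTop, μ' t ≤ θ)
    {ω y y' y'' : ℝ → E} (hω : IntegrableAtFilter (fun t => (γ t)⁻¹ * ‖ω t‖) atTop)
    (hy : ∀ᶠ t in atTop, HasDerivAt y (y' t) t) (hy' : ∀ᶠ t in atTop, HasDerivAt y' (y'' t) t)
    (hode : ∀ᶠ t in atTop, y'' t + γ t • y' t = ω t) : ∃ l, Tendsto y atTop (𝓝 l) := by
  have hγcont : ∀ᶠ t in atTop, ContinuousAt γ t := by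
    filter_upwards [hγ, hμ] with t hpos hderiv
    exact inv_inv γ ▸ hderiv.continuousAt.inv₀ (inv_ne_zero hpos.ne')
  obtain ⟨Γ, hΓ⟩ := exists_eventually_hasDerivAt_of_continuousAt hγcont
  have hexp := eventually_integrableOn_and_integral_Ioi_exp_neg_le hθ hγ hμ hμ' hΓ
  obtain ⟨a, hint, -⟩ := hexp.exists
  refine exists_tendsto_of_linear_ode_of_integral_Ioi_exp_neg_le hΓ
    ⟨Ioi a, Ioi_mem_atTop a, hint⟩ (hω.smul (1 - θ)⁻¹) (hexp.mono fun t ht => ?_) hy hy' hode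
  rw [Pi.smul_apply, smul_eq_mul, ← mul_assoc]
  exact mul_le_mul_of_nonneg_right ht.2 (norm_nonneg _)

theorem linear_ode_strong_convergence
    {H : Type*} [NormedAddCommGroup H] [InnerProductSpace ℝ H] [CompleteSpace H]
    (c α : ℝ) (hc : 0 < c) (hα0 : 0 ≤ α) (hα1 : α < 1)
    (ω : ℝ → H) (hωmeas : AEStronglyMeasurable ω (volume.restrict (Ici (0:ℝ))))
    (hωint : IntegrableOn (fun t => (c / (1 + t) ^ α)⁻¹ * ‖ω t‖) (Ici (0:ℝ)))
    (y y' y'' : ℝ → H)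
    (hy1 : ∀ t ∈ Ici (0:ℝ), HasDerivAt y (y' t) t)
    (hy2 : ∀ t ∈ Ici (0:ℝ), HasDerivAt y' (y'' t) t)
    (hode : ∀ t ∈ Ici (0:ℝ), y'' t + (c / (1 + t) ^ α) • y' t = ω t) :
    ∃ l : H, Tendsto y atTop (nhds l) :=
  linear_ode_strong_convergence_general one_half_lt_one
    ((eventually_ge_atTop 0).mono fun t ht => by positivity)
    ((eventually_gt_atTop (-1)).mono fun t => hasDerivAt_inv_div_one_add_rpow c)
    ((tendsto_mul_one_add_rpow_sub_one_div_zero c hα1).eventually_le_const one_half_pos)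
    ⟨Ici 0, Ici_mem_atTop 0, hωint⟩ (eventually_atTop.2 ⟨0, hy1⟩) (eventually_atTop.2 ⟨0, hy2⟩)
    (eventually_atTop.2 ⟨0, hode⟩)
end

section
/- Let x be a solution of the heavy ball equation with vanishing damping and source term g satisfying ∫₀^∞ (1+t)^α ‖g(t)‖ dt < ∞. Then the trajectory is bounded: sup_{t≥0} ‖x(t)‖ < ∞. Moreover, for every x* ∈ argmin Φ, sup_{t≥0} ‖x(t) − x* + h(t) x'(t)‖ < ∞, where h(t) = e^{Γ(t)} ∫_t^∞ e^{−Γ(s)} ds and Γ(t) = ∫₀^t γ(s) ds. -/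
open MeasureTheory Filter Real Set RealInnerProductSpace

/-!
The weight `h` solves `h' = γ h - 1`, so `u = x - p + h x'` satisfies `u' = h (g - ∇Φ(x))`: the
damping has disappeared. For a minimizer `p` the energy `V = h² (Φ(x) - Φ(p)) + ‖u‖² / 2` has
derivative
`V' = h (2 (γ h - 1) (Φ(x) - Φ(p)) - ⟪x - p, ∇Φ(x)⟫ + ⟪u, g⟫)`.
By convexity `Φ(x) - Φ(p) ≤ ⟪x - p, ∇Φ(x)⟫`, so as soon as `γ h ≤ 3 / 2` only the source term
survives, `V' ≤ h ‖g‖ ‖u‖ ≤ h ‖g‖ (1 + V)`, and Grönwall's inequality bounds `V`, hence `u`. Finally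
`(x - p) + h (x - p)'` being bounded by `M` forces `‖x - p‖` to decrease whenever it exceeds `M`.

The bound `γ h ≤ 3 / 2` follows from `-γ' ≤ γ² / 3`, because then `3 / 2 * e^{-Γ} / γ` decreases at
least as fast as the tail integral of `e^{-Γ}`. For `γ(t) = c / (1 + t)` this is the classical
condition `3 ≤ c`; for `γ(t) = c / (1 + t) ^ α` with `α < 1` it holds for all large `t`.
-/

section Calculus

theorem fderiv_apply_sub_le_of_convexOn {E : Type*} [NormedAddCommGroup E] [NormedSpace ℝ E]
    {S : Set E} {f : E → ℝ} {f' : E →L[ℝ] ℝ} {a b : E} (hf : ConvexOn ℝ S f) (ha : a ∈ S)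
    (hb : b ∈ S) (hf' : HasFDerivWithinAt f f' S a) : f' (b - a) ≤ f b - f a := by
  let line : ℝ →ᵃ[ℝ] E := AffineMap.lineMap a b
  have hline0 : line 0 = a := AffineMap.lineMap_apply_zero a b
  have hline1 : line 1 = b := AffineMap.lineMap_apply_one a b
  have hderiv : HasDerivWithinAt (f ∘ line) (f' (b - a)) (line ⁻¹' S) 0 :=
    HasFDerivWithinAt.comp_hasDerivWithinAt 0 (by rwa [hline0])
      AffineMap.hasDerivWithinAt_lineMap (mapsTo_preimage line S)
  have hslope := (hf.comp_affineMap line).le_slope_of_hasDerivWithinAt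
    (by simpa [hline0]) (by simpa [hline1]) one_pos hderiv
  simpa [slope_def_field, hline0, hline1] using hslope

theorem hasDerivWithinAt_integral_Ici {E : Type*} [NormedAddCommGroup E] [NormedSpace ℝ E]
    [CompleteSpace E] {f : ℝ → E} {a t : ℝ} (hf : ContinuousOn f (Ici a)) (ht : t ∈ Ici a) :
    HasDerivWithinAt (fun r ↦ ∫ s in a..r, f s) (f t) (Ici a) t := by
  have hIcc : ContinuousOn f (Icc a (t + 1)) := hf.mono Icc_subset_Ici_self
  have htIcc : t ∈ Icc a (t + 1) := ⟨ht, by linarith⟩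
  have : Fact (t ∈ Icc a (t + 1)) := ⟨htIcc⟩
  have hderiv : HasDerivWithinAt (fun r ↦ ∫ s in a..r, f s) (f t) (Icc a (t + 1)) t :=
    intervalIntegral.integral_hasDerivWithinAt_right
      ((hf.mono (uIcc_of_le (mem_Ici.1 ht) ▸ Icc_subset_Ici_self)).intervalIntegrable)
      (hIcc.stronglyMeasurableAtFilter_nhdsWithin measurableSet_Icc t) (hIcc t htIcc)
  refine hderiv.mono_of_mem_nhdsWithin ?_
  rw [← Ici_inter_Iic]
  exact inter_mem self_mem_nhdsWithin (mem_nhdsWithin_of_mem_nhds (Iic_mem_nhds (by linarith)))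

theorem hasDerivWithinAt_integral_Ioi {E : Type*} [NormedAddCommGroup E] [NormedSpace ℝ E]
    [CompleteSpace E] {f : ℝ → E} {a t : ℝ} (hf : ContinuousOn f (Ici a))
    (hint : IntegrableOn f (Ioi a)) (ht : t ∈ Ici a) :
    HasDerivWithinAt (fun r ↦ ∫ s in Ioi r, f s) (-f t) (Ici a) t := by
  have heq : ∀ r ∈ Ici a, ∫ s in Ioi r, f s = (∫ s in Ioi a, f s) - ∫ s in a..r, f s :=
    fun r hr ↦ by rw [← intervalIntegral.integral_Ioi_sub_Ioi hint hr, sub_sub_cancel]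
  exact ((hasDerivWithinAt_integral_Ici hf ht).const_sub _).congr heq (heq t ht)

theorem integral_le_of_deriv_le_neg {F F' f : ℝ → ℝ} {a b : ℝ} (hab : a ≤ b)
    (hF : ∀ t ∈ Ici a, HasDerivWithinAt F (F' t) (Ici a) t) (hF0 : 0 ≤ F b)
    (hf : ContinuousOn f (Ici a)) (hle : ∀ t ∈ Ici a, F' t ≤ -f t) :
    ∫ t in a..b, f t ≤ F a := by
  have hsub : ∫ t in a..b, f t ≤ -F b - -F a :=
    intervalIntegral.integral_le_sub_of_hasDeriv_right_of_le hab
      (fun t ht ↦ ((hF t ht.1).continuousWithinAt.mono Icc_subset_Ici_self).neg)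
      (fun t ht ↦ ((hF t ht.1.le).mono (Ioi_subset_Ici ht.1.le)).neg)
      (hf.mono Icc_subset_Ici_self).integrableOn_Icc
      (fun t ht ↦ le_neg_of_le_neg (hle t ht.1.le))
  linarith

theorem integrableOn_Ioi_and_integral_le_of_deriv_le_neg {F F' f : ℝ → ℝ} {a : ℝ}
    (hF : ∀ t ∈ Ici a, HasDerivWithinAt F (F' t) (Ici a) t) (hF0 : ∀ t ∈ Ici a, 0 ≤ F t)
    (hf : ContinuousOn f (Ici a)) (hf0 : ∀ t ∈ Ici a, 0 ≤ f t) (hle : ∀ t ∈ Ici a, F' t ≤ -f t) :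
    IntegrableOn f (Ioi a) ∧ ∫ t in Ioi a, f t ≤ F a := by
  have hnorm : ∀ b ≥ a, ∫ t in a..b, ‖f t‖ ≤ F a := fun b hab ↦
    integral_le_of_deriv_le_neg hab hF (hF0 b hab) hf.norm
      fun t ht ↦ by rw [norm_of_nonneg (hf0 t ht)]; exact hle t ht
  have hint : IntegrableOn f (Ioi a) :=
    integrableOn_Ioi_of_intervalIntegral_norm_bounded (F a) a
      (fun b ↦ (hf.mono Icc_subset_Ici_self).integrableOn_Icc.mono_set Ioc_subset_Icc_self)
      tendsto_id ((eventually_ge_atTop a).mono hnorm)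
  refine ⟨hint, le_of_tendsto (intervalIntegral_tendsto_integral_Ioi a hint tendsto_id) ?_⟩
  filter_upwards [eventually_ge_atTop a] with b hab
  exact integral_le_of_deriv_le_neg hab hF (hF0 b hab) hf hle

theorem integrableOn_mul_of_integrableOn_div {γ h k : ℝ → ℝ} {S : Set ℝ} {C : ℝ}
    (hS : MeasurableSet S) (hγ : ContinuousOn γ S) (hh : ContinuousOn h S)
    (hne : ∀ t ∈ S, γ t ≠ 0) (hbound : ∀ t ∈ S, ‖γ t * h t‖ ≤ C)
    (hk : IntegrableOn (fun t ↦ k t / γ t) S) : IntegrableOn (fun t ↦ h t * k t) S := by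
  have hprod : IntegrableOn (fun t ↦ γ t * h t * (k t / γ t)) S :=
    hk.bdd_mul ((hγ.mul hh).aestronglyMeasurable hS) (ae_restrict_of_forall_mem hS hbound)
  refine hprod.congr_fun (fun t ht ↦ ?_) hS
  have := hne t ht
  field_simp

theorem le_mul_exp_integral_of_deriv_le_mul {f f' k : ℝ → ℝ} {a b : ℝ} (hab : a ≤ b)
    (hf : ContinuousOn f (Icc a b)) (hf' : ∀ t ∈ Ioo a b, HasDerivWithinAt f (f' t) (Ioi t) t)
    (hpos : ∀ t ∈ Icc a b, 0 < f t) (hk : IntegrableOn k (Icc a b))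
    (hle : ∀ t ∈ Ioo a b, f' t ≤ k t * f t) :
    f b ≤ f a * exp (∫ t in a..b, k t) := by
  have hlog : log (f b) - log (f a) ≤ ∫ t in a..b, k t :=
    intervalIntegral.sub_le_integral_of_hasDeriv_right_of_le hab
      (hf.log fun t ht ↦ (hpos t ht).ne')
      (fun t ht ↦ (hf' t ht).log (hpos t (Ioo_subset_Icc_self ht)).ne') hk
      (fun t ht ↦ (div_le_iff₀ (hpos t (Ioo_subset_Icc_self ht))).2 (hle t ht))
  calc f b = exp (log (f b)) := (exp_log (hpos b (right_mem_Icc.2 hab))).symm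
    _ ≤ exp (log (f a) + ∫ t in a..b, k t) := exp_le_exp.2 (by linarith)
    _ = f a * exp (∫ t in a..b, k t) := by rw [exp_add, exp_log (hpos a (left_mem_Icc.2 hab))]

variable {H : Type*} [NormedAddCommGroup H] [InnerProductSpace ℝ H]

theorem inner_neg_of_norm_add_smul_le {y v : H} {h M : ℝ} (hh : 0 < h)
    (hbound : ‖y + h • v‖ ≤ M) (hM : M < ‖y‖) : ⟪y, v⟫ < 0 := by
  have hy : 0 < ‖y‖ := ((norm_nonneg _).trans hbound).trans_lt hM
  have hlt : h * ⟪y, v⟫ < 0 :=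
    calc h * ⟪y, v⟫ = ⟪y, y + h • v⟫ - ‖y‖ * ‖y‖ := by
          rw [inner_add_right, inner_smul_right, real_inner_self_eq_norm_mul_norm]; ring
      _ ≤ ‖y‖ * ‖y + h • v‖ - ‖y‖ * ‖y‖ := by gcongr; exact real_inner_le_norm _ _
      _ = ‖y‖ * (‖y + h • v‖ - ‖y‖) := by ring
      _ < 0 := mul_neg_of_pos_of_neg hy (by linarith)
  exact neg_of_mul_neg_right hlt hh.le

theorem norm_le_max_of_norm_add_smul_deriv_le {y v : ℝ → H} {h : ℝ → ℝ} {a M : ℝ}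
    (hy : ∀ t ∈ Ici a, HasDerivWithinAt y (v t) (Ici a) t) (hh : ∀ t ∈ Ici a, 0 < h t)
    (hbound : ∀ t ∈ Ici a, ‖y t + h t • v t‖ ≤ M) {t : ℝ} (ht : t ∈ Ici a) :
    ‖y t‖ ≤ max ‖y a‖ M := by
  refine le_of_forall_gt_imp_ge_of_dense fun R hR ↦ ?_
  obtain ⟨hyR, hMR⟩ := max_lt_iff.1 hR
  have hR0 : 0 < R := (norm_nonneg _).trans_lt hyR
  have hsq : ‖y t‖ ^ 2 ≤ R ^ 2 :=
    image_le_of_deriv_right_lt_deriv_boundary' (f := fun s ↦ ‖y s‖ ^ 2) (B := fun _ ↦ R ^ 2)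
      (fun s hs ↦ (hy s hs.1).norm_sq.continuousWithinAt.mono Icc_subset_Ici_self)
      (fun s hs ↦ (hy s hs.1).norm_sq.mono (Ici_subset_Ici.2 hs.1))
      (by gcongr) continuousOn_const (fun s _ ↦ hasDerivWithinAt_const s _ _)
      (fun s hs heq ↦ by
        have hnorm : ‖y s‖ = R := (sq_eq_sq₀ (norm_nonneg _) hR0.le).1 heq
        have hneg : ⟪y s, v s⟫ < 0 :=
          inner_neg_of_norm_add_smul_le (hh s hs.1) (hbound s hs.1) (hnorm ▸ hMR)
        linarith)
      (right_mem_Icc.2 ht)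
  exact (sq_le_sq₀ (norm_nonneg _) hR0.le).1 hsq

end Calculus

section DampingWeight

/-- The weight `h(t) = e^{Γ(t)} ∫_t^∞ e^{-Γ(s)} ds` attached to a damping coefficient `γ`, where
`Γ(t) = ∫₀^t γ(s) ds`. When `e^{-Γ}` is integrable it solves `h' = γ h - 1`; otherwise the Bochner
integral makes it `0`. -/
noncomputable def dampingWeight (γ : ℝ → ℝ) (t : ℝ) : ℝ :=
  exp (∫ s in (0 : ℝ)..t, γ s) * ∫ s in Ioi t, exp (-∫ r in (0 : ℝ)..s, γ r)

variable {γ γ' : ℝ → ℝ}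

theorem continuousOn_exp_neg_integral (hγ : ContinuousOn γ (Ici 0)) :
    ContinuousOn (fun t ↦ exp (-∫ s in (0 : ℝ)..t, γ s)) (Ici 0) := fun _ ht ↦
  (hasDerivWithinAt_integral_Ici hγ ht).continuousWithinAt.neg.rexp

theorem dampingWeight_pos
    (hint : IntegrableOn (fun t ↦ exp (-∫ s in (0 : ℝ)..t, γ s)) (Ioi 0)) {t : ℝ}
    (ht : t ∈ Ici 0) : 0 < dampingWeight γ t := by
  have : NeZero (volume.restrict (Ioi t)) := ⟨by simp⟩
  exact mul_pos (exp_pos _) (integral_exp_pos (hint.mono_set (Ioi_subset_Ioi ht)))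

theorem hasDerivWithinAt_dampingWeight (hγ : ContinuousOn γ (Ici 0))
    (hint : IntegrableOn (fun t ↦ exp (-∫ s in (0 : ℝ)..t, γ s)) (Ioi 0)) {t : ℝ}
    (ht : t ∈ Ici 0) :
    HasDerivWithinAt (dampingWeight γ) (γ t * dampingWeight γ t - 1) (Ici 0) t := by
  refine ((hasDerivWithinAt_integral_Ici hγ ht).exp.mul (hasDerivWithinAt_integral_Ioi
    (continuousOn_exp_neg_integral hγ) hint ht)).congr_deriv ?_
  rw [mul_neg, ← exp_add, add_neg_cancel, exp_zero, dampingWeight]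
  ring

theorem hasDerivWithinAt_exp_neg_integral_div (hγ : ContinuousOn γ (Ici 0)) {t d : ℝ}
    (ht : t ∈ Ici 0) (hγ' : HasDerivWithinAt γ d (Ici 0) t) (hne : γ t ≠ 0) :
    HasDerivWithinAt (fun r ↦ exp (-∫ s in (0 : ℝ)..r, γ s) / γ r)
      ((-d / γ t ^ 2 - 1) * exp (-∫ s in (0 : ℝ)..t, γ s)) (Ici 0) t := by
  refine ((hasDerivWithinAt_integral_Ici hγ ht).fun_neg.exp.fun_div hγ' hne).congr_deriv ?_
  field_simp
  ring

theorem integrableOn_Ioi_and_integral_exp_neg_integral_le {a : ℝ} (ha : 0 ≤ a)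
    (hγ' : ∀ t ∈ Ici 0, HasDerivWithinAt γ (γ' t) (Ici 0) t) (hpos : ∀ t ∈ Ici 0, 0 < γ t)
    (hslow : ∀ t ∈ Ici a, -γ' t ≤ γ t ^ 2 / 3) :
    IntegrableOn (fun t ↦ exp (-∫ s in (0 : ℝ)..t, γ s)) (Ioi a) ∧
      ∫ t in Ioi a, exp (-∫ s in (0 : ℝ)..t, γ s) ≤
        3 / 2 * (exp (-∫ s in (0 : ℝ)..a, γ s) / γ a) := by
  have hsub : Ici a ⊆ Ici 0 := Ici_subset_Ici.2 ha
  have hγ : ContinuousOn γ (Ici 0) := fun t ht ↦ (hγ' t ht).continuousWithinAt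
  have hratio : ∀ t ∈ Ici a, -γ' t / γ t ^ 2 ≤ 1 / 3 := fun t ht ↦
    (div_le_iff₀ (pow_pos (hpos t (hsub ht)) 2)).2 (by linarith [hslow t ht])
  have hdecay : ∀ t ∈ Ici a, 3 / 2 * ((-γ' t / γ t ^ 2 - 1) * exp (-∫ s in (0 : ℝ)..t, γ s)) ≤
      -exp (-∫ s in (0 : ℝ)..t, γ s) := fun t ht ↦ by
    have := mul_le_mul_of_nonneg_right (hratio t ht) (exp_pos (-∫ s in (0 : ℝ)..t, γ s)).le
    linarith
  exact integrableOn_Ioi_and_integral_le_of_deriv_le_neg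
    (fun t ht ↦ ((hasDerivWithinAt_exp_neg_integral_div hγ (hsub ht) (hγ' t (hsub ht))
      (hpos t (hsub ht)).ne').const_mul (3 / 2)).mono hsub)
    (fun t ht ↦ by have := hpos t (hsub ht); positivity)
    ((continuousOn_exp_neg_integral hγ).mono hsub) (fun t _ ↦ (exp_pos _).le)
    hdecay

theorem integrableOn_exp_neg_integral {a : ℝ} (ha : 0 ≤ a)
    (hγ' : ∀ t ∈ Ici 0, HasDerivWithinAt γ (γ' t) (Ici 0) t) (hpos : ∀ t ∈ Ici 0, 0 < γ t)
    (hslow : ∀ t ∈ Ici a, -γ' t ≤ γ t ^ 2 / 3) :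
    IntegrableOn (fun t ↦ exp (-∫ s in (0 : ℝ)..t, γ s)) (Ioi 0) := by
  have hcont := continuousOn_exp_neg_integral fun t ht ↦ (hγ' t ht).continuousWithinAt
  have hhead : IntegrableOn (fun t ↦ exp (-∫ s in (0 : ℝ)..t, γ s)) (Ioc 0 a) :=
    (hcont.mono Icc_subset_Ici_self).integrableOn_Icc.mono_set Ioc_subset_Icc_self
  exact Ioc_union_Ioi_eq_Ioi ha ▸
    hhead.union (integrableOn_Ioi_and_integral_exp_neg_integral_le ha hγ' hpos hslow).1

theorem mul_dampingWeight_le_three_halves {a : ℝ} (ha : 0 ≤ a)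
    (hγ' : ∀ t ∈ Ici 0, HasDerivWithinAt γ (γ' t) (Ici 0) t) (hpos : ∀ t ∈ Ici 0, 0 < γ t)
    (hslow : ∀ t ∈ Ici a, -γ' t ≤ γ t ^ 2 / 3) :
    γ a * dampingWeight γ a ≤ 3 / 2 := by
  have hposa : 0 < γ a := hpos a ha
  calc γ a * dampingWeight γ a
      ≤ γ a * (exp (∫ s in (0 : ℝ)..a, γ s) *
          (3 / 2 * (exp (-∫ s in (0 : ℝ)..a, γ s) / γ a))) := by
        unfold dampingWeight
        gcongr
        exact (integrableOn_Ioi_and_integral_exp_neg_integral_le ha hγ' hpos hslow).2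
    _ = 3 / 2 := by rw [exp_neg]; field_simp

end DampingWeight

section PowerDamping

/-- The damping coefficient `γ(t) = c / (1 + t) ^ α`. -/
noncomputable def powerDamping (c α t : ℝ) : ℝ := c / (1 + t) ^ α

variable {c α t : ℝ}

theorem powerDamping_pos (hc : 0 < c) (ht : -1 < t) : 0 < powerDamping c α t :=
  div_pos hc (rpow_pos_of_pos (by linarith) α)

theorem hasDerivAt_powerDamping (ht : -1 < t) :
    HasDerivAt (powerDamping c α) (-(c * (α * (1 + t) ^ (α - 1))) / ((1 + t) ^ α) ^ 2) t := by
  have hbase : 0 < 1 + t := by linarith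
  have hpow : HasDerivAt (fun s ↦ (1 + s) ^ α) (α * (1 + t) ^ (α - 1)) t := by
    simpa using ((hasDerivAt_id t).const_add 1).rpow_const (p := α) (Or.inl hbase.ne')
  exact ((hasDerivAt_const t c).fun_div hpow (rpow_pos_of_pos hbase α).ne').congr_deriv (by simp)

theorem eventually_neg_deriv_powerDamping_le (hc : 0 < c) (hα : α < 1) :
    ∀ᶠ t in atTop, -(-(c * (α * (1 + t) ^ (α - 1))) / ((1 + t) ^ α) ^ 2) ≤
      powerDamping c α t ^ 2 / 3 := by
  have hdecay : Tendsto (fun t : ℝ ↦ α * (1 + t) ^ (α - 1)) atTop (nhds 0) := by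
    have hpow := tendsto_rpow_neg_atTop (sub_pos.2 hα)
    rw [neg_sub] at hpow
    simpa using (hpow.comp (tendsto_atTop_add_const_left _ 1 tendsto_id)).const_mul α
  filter_upwards [hdecay.eventually_le_const (show 0 < c / 3 by positivity)] with t ht
  calc -(-(c * (α * (1 + t) ^ (α - 1))) / ((1 + t) ^ α) ^ 2)
      = c * (α * (1 + t) ^ (α - 1)) / ((1 + t) ^ α) ^ 2 := by rw [neg_div, neg_neg]
    _ ≤ c * (c / 3) / ((1 + t) ^ α) ^ 2 := by gcongr
    _ = powerDamping c α t ^ 2 / 3 := by rw [powerDamping, div_pow]; ring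

end PowerDamping

section HeavyBall

variable {H : Type*} [NormedAddCommGroup H] [InnerProductSpace ℝ H]

/-- `x`, with velocity `v`, solves the heavy-ball equation `x'' + γ x' + Φ'(x) = g` on `[0, ∞)`,
written as a first-order system; the derivatives at `0` are one-sided. -/
structure IsHeavyBallTrajectory_s13 (γ : ℝ → ℝ) (Φ' : H → H) (g x v : ℝ → H) : Prop where
  hasDerivWithinAt_position : ∀ t ∈ Ici 0, HasDerivWithinAt x (v t) (Ici 0) t
  hasDerivWithinAt_velocity :
    ∀ t ∈ Ici 0, HasDerivWithinAt v (g t - γ t • v t - Φ' (x t)) (Ici 0) t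

/-- The Lyapunov function `h² (Φ(x) - Φ(p)) + ‖x - p + h v‖² / 2` of a trajectory `x` with velocity
`v`, relative to a point `p` and a weight `h`. -/
noncomputable def heavyBallEnergy (h : ℝ → ℝ) (Φ : H → ℝ) (p : H) (x v : ℝ → H) (t : ℝ) : ℝ :=
  h t ^ 2 * (Φ (x t) - Φ p) + ‖x t - p + h t • v t‖ ^ 2 / 2

variable {γ h : ℝ → ℝ} {Φ : H → ℝ} {Φ' : H → H} {g x v : ℝ → H} {p : H} {t : ℝ}

theorem IsHeavyBallTrajectory_s13.of_hasDerivAt {x' x'' : ℝ → H}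
    (hx : ∀ t ∈ Ici 0, HasDerivAt x (x' t) t) (hx' : ∀ t ∈ Ici 0, HasDerivAt x' (x'' t) t)
    (hode : ∀ t ∈ Ici 0, x'' t + γ t • x' t + Φ' (x t) = g t) :
    IsHeavyBallTrajectory_s13 γ Φ' g x x' where
  hasDerivWithinAt_position t ht := (hx t ht).hasDerivWithinAt
  hasDerivWithinAt_velocity t ht :=
    (hx' t ht).hasDerivWithinAt.congr_deriv (by rw [← hode t ht]; abel)

theorem norm_le_one_add_heavyBallEnergy (hp : Φ p ≤ Φ (x t)) :
    ‖x t - p + h t • v t‖ ≤ 1 + heavyBallEnergy h Φ p x v t := by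
  have hpot : 0 ≤ h t ^ 2 * (Φ (x t) - Φ p) := mul_nonneg (sq_nonneg _) (sub_nonneg.2 hp)
  unfold heavyBallEnergy
  linarith [sq_nonneg (‖x t - p + h t • v t‖ - 1)]

theorem heavyBallEnergy_nonneg (hp : Φ p ≤ Φ (x t)) : 0 ≤ heavyBallEnergy h Φ p x v t := by
  have := sub_nonneg.2 hp
  unfold heavyBallEnergy
  positivity

theorem heavyBallEnergy_deriv_le (hh0 : 0 ≤ h t) (hγh : γ t * h t ≤ 3 / 2) (hp : Φ p ≤ Φ (x t))
    (hgrad : Φ (x t) - Φ p ≤ ⟪x t - p, Φ' (x t)⟫) :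
    h t * (2 * (γ t * h t - 1) * (Φ (x t) - Φ p) - ⟪x t - p, Φ' (x t)⟫ +
        ⟪x t - p + h t • v t, g t⟫) ≤
      h t * ‖g t‖ * (1 + heavyBallEnergy h Φ p x v t) := by
  have hcoeff : 2 * (γ t * h t - 1) * (Φ (x t) - Φ p) ≤ ⟪x t - p, Φ' (x t)⟫ :=
    (mul_le_of_le_one_left (sub_nonneg.2 hp) (by linarith)).trans hgrad
  calc h t * (2 * (γ t * h t - 1) * (Φ (x t) - Φ p) - ⟪x t - p, Φ' (x t)⟫ +
        ⟪x t - p + h t • v t, g t⟫)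
      ≤ h t * (‖x t - p + h t • v t‖ * ‖g t‖) := by
        gcongr; linarith [real_inner_le_norm (x t - p + h t • v t) (g t)]
    _ ≤ h t * ((1 + heavyBallEnergy h Φ p x v t) * ‖g t‖) := by
        gcongr; exact norm_le_one_add_heavyBallEnergy hp
    _ = h t * ‖g t‖ * (1 + heavyBallEnergy h Φ p x v t) := by ring

namespace IsHeavyBallTrajectory_s13

theorem hasDerivWithinAt_add_smul (hx : IsHeavyBallTrajectory_s13 γ Φ' g x v) (p : H)
    (ht : t ∈ Ici 0) (hh : HasDerivWithinAt h (γ t * h t - 1) (Ici 0) t) :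
    HasDerivWithinAt (fun s ↦ x s - p + h s • v s) (h t • (g t - Φ' (x t))) (Ici 0) t :=
  (((hx.hasDerivWithinAt_position t ht).sub_const p).add
    (hh.smul (hx.hasDerivWithinAt_velocity t ht))).congr_deriv (by module)

theorem hasDerivWithinAt_energy (hx : IsHeavyBallTrajectory_s13 γ Φ' g x v) (p : H)
    (ht : t ∈ Ici 0) (hΦ : HasFDerivAt Φ (innerSL ℝ (Φ' (x t))) (x t))
    (hh : HasDerivWithinAt h (γ t * h t - 1) (Ici 0) t) :
    HasDerivWithinAt (heavyBallEnergy h Φ p x v)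
      (h t * (2 * (γ t * h t - 1) * (Φ (x t) - Φ p) - ⟪x t - p, Φ' (x t)⟫ +
        ⟪x t - p + h t • v t, g t⟫)) (Ici 0) t := by
  have hpot : HasDerivWithinAt (fun s ↦ Φ (x s) - Φ p) ⟪Φ' (x t), v t⟫ (Ici 0) t :=
    (hΦ.comp_hasDerivWithinAt t (hx.hasDerivWithinAt_position t ht)).sub_const (Φ p)
  refine (((hh.fun_pow 2).fun_mul hpot).fun_add
    ((hx.hasDerivWithinAt_add_smul p ht hh).norm_sq.div_const 2)).congr_deriv ?_
  simp only [inner_smul_right, inner_sub_right, inner_add_left, real_inner_smul_left,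
    real_inner_comm (v t) (Φ' (x t))]
  ring

theorem one_add_energy_le (hx : IsHeavyBallTrajectory_s13 γ Φ' g x v) {T : ℝ} (hT : 0 ≤ T)
    (hΦ : ∀ u, HasFDerivAt Φ (innerSL ℝ (Φ' u)) u) (hp : ∀ u, Φ p ≤ Φ u)
    (hgrad : ∀ u, Φ u - Φ p ≤ ⟪u - p, Φ' u⟫)
    (hh : ∀ t ∈ Ici 0, HasDerivWithinAt h (γ t * h t - 1) (Ici 0) t)
    (hh0 : ∀ t ∈ Ici T, 0 ≤ h t) (hγh : ∀ t ∈ Ici T, γ t * h t ≤ 3 / 2)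
    (hg : IntegrableOn (fun t ↦ h t * ‖g t‖) (Ici T)) (ht : t ∈ Ici T) :
    1 + heavyBallEnergy h Φ p x v t ≤
      (1 + heavyBallEnergy h Φ p x v T) * exp (∫ s in Ici T, h s * ‖g s‖) := by
  have hderiv := fun s (hs : T ≤ s) ↦
    (hx.hasDerivWithinAt_energy p (hT.trans hs) (hΦ (x s)) (hh s (hT.trans hs))).const_add 1
  have hpos : ∀ s, 0 < 1 + heavyBallEnergy h Φ p x v s := fun s ↦
    add_pos_of_pos_of_nonneg one_pos (heavyBallEnergy_nonneg (hp (x s)))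
  have hint : ∫ s in T..t, h s * ‖g s‖ ≤ ∫ s in Ici T, h s * ‖g s‖ := by
    rw [intervalIntegral.integral_of_le ht]
    refine setIntegral_mono_set hg ?_ (Ioc_subset_Icc_self.trans Icc_subset_Ici_self).eventuallyLE
    filter_upwards [self_mem_ae_restrict measurableSet_Ici] with s hs
    exact mul_nonneg (hh0 s hs) (norm_nonneg _)
  calc 1 + heavyBallEnergy h Φ p x v t
      ≤ (1 + heavyBallEnergy h Φ p x v T) * exp (∫ s in T..t, h s * ‖g s‖) :=
        le_mul_exp_integral_of_deriv_le_mul ht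
          (fun s hs ↦ (hderiv s hs.1).continuousWithinAt.mono fun r hr ↦ hT.trans hr.1)
          (fun s hs ↦ (hderiv s hs.1.le).mono fun r hr ↦ hT.trans (hs.1.trans hr).le)
          (fun s _ ↦ hpos s) (hg.mono_set Icc_subset_Ici_self)
          (fun s hs ↦ heavyBallEnergy_deriv_le (hh0 s hs.1.le) (hγh s hs.1.le) (hp _) (hgrad _))
    _ ≤ _ := by have := (hpos T).le; gcongr

theorem exists_norm_add_smul_le (hx : IsHeavyBallTrajectory_s13 γ Φ' g x v) {T : ℝ} (hT : 0 ≤ T)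
    (hΦ : ∀ u, HasFDerivAt Φ (innerSL ℝ (Φ' u)) u) (hp : ∀ u, Φ p ≤ Φ u)
    (hgrad : ∀ u, Φ u - Φ p ≤ ⟪u - p, Φ' u⟫)
    (hh : ∀ t ∈ Ici 0, HasDerivWithinAt h (γ t * h t - 1) (Ici 0) t)
    (hh0 : ∀ t ∈ Ici T, 0 ≤ h t) (hγh : ∀ t ∈ Ici T, γ t * h t ≤ 3 / 2)
    (hg : IntegrableOn (fun t ↦ h t * ‖g t‖) (Ici T)) :
    ∃ M : ℝ, ∀ t ∈ Ici 0, ‖x t - p + h t • v t‖ ≤ M := by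
  have hcont : ContinuousOn (fun t ↦ x t - p + h t • v t) (Icc 0 T) := fun t ht ↦
    (hx.hasDerivWithinAt_add_smul p ht.1 (hh t ht.1)).continuousWithinAt.mono Icc_subset_Ici_self
  obtain ⟨M, hM⟩ := isCompact_Icc.exists_bound_of_continuousOn hcont
  refine ⟨max M ((1 + heavyBallEnergy h Φ p x v T) * exp (∫ s in Ici T, h s * ‖g s‖)),
    fun t ht ↦ ?_⟩
  rcases le_total t T with htT | hTt
  · exact (hM t ⟨ht, htT⟩).trans (le_max_left _ _)
  · exact ((norm_le_one_add_heavyBallEnergy (hp (x t))).trans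
      (hx.one_add_energy_le hT hΦ hp hgrad hh hh0 hγh hg hTt)).trans (le_max_right _ _)

end IsHeavyBallTrajectory_s13

theorem IsHeavyBallTrajectory_s13.exists_norm_add_dampingWeight_smul_le {γ' : ℝ → ℝ}
    (hx : IsHeavyBallTrajectory_s13 γ Φ' g x v)
    (hγ' : ∀ t ∈ Ici 0, HasDerivWithinAt γ (γ' t) (Ici 0) t) (hpos : ∀ t ∈ Ici 0, 0 < γ t)
    {T : ℝ} (hT : 0 ≤ T) (hslow : ∀ t ∈ Ici T, -γ' t ≤ γ t ^ 2 / 3)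
    (hΦ : ∀ u, HasFDerivAt Φ (innerSL ℝ (Φ' u)) u) (hp : ∀ u, Φ p ≤ Φ u)
    (hgrad : ∀ u, Φ u - Φ p ≤ ⟪u - p, Φ' u⟫)
    (hg : IntegrableOn (fun t ↦ ‖g t‖ / γ t) (Ici 0)) :
    ∃ M : ℝ, ∀ t ∈ Ici 0, ‖x t - p + dampingWeight γ t • v t‖ ≤ M := by
  have hsub : Ici T ⊆ Ici 0 := Ici_subset_Ici.2 hT
  have hγ : ContinuousOn γ (Ici 0) := fun t ht ↦ (hγ' t ht).continuousWithinAt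
  have hint := integrableOn_exp_neg_integral hT hγ' hpos hslow
  have hh := fun t (ht : t ∈ Ici 0) ↦ hasDerivWithinAt_dampingWeight hγ hint ht
  have hh0 : ∀ t ∈ Ici T, 0 ≤ dampingWeight γ t := fun t ht ↦
    (dampingWeight_pos hint (hsub ht)).le
  have hγh : ∀ t ∈ Ici T, γ t * dampingWeight γ t ≤ 3 / 2 := fun t ht ↦
    mul_dampingWeight_le_three_halves (hsub ht) hγ' hpos
      fun s hs ↦ hslow s (Ici_subset_Ici.2 ht hs)
  have hsource : IntegrableOn (fun t ↦ dampingWeight γ t * ‖g t‖) (Ici T) :=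
    integrableOn_mul_of_integrableOn_div measurableSet_Ici (hγ.mono hsub)
      (fun t ht ↦ (hh t (hsub ht)).continuousWithinAt.mono hsub) (fun t ht ↦ (hpos t (hsub ht)).ne')
      (fun t ht ↦ (norm_of_nonneg (mul_nonneg (hpos t (hsub ht)).le (hh0 t ht))).trans_le
        (hγh t ht)) (hg.mono_set hsub)
  exact hx.exists_norm_add_smul_le hT hΦ hp hgrad hh hh0 hγh hsource

theorem heavy_ball_trajectory_bounded_general {γ' : ℝ → ℝ}
    (hγ' : ∀ t ∈ Ici 0, HasDerivWithinAt γ (γ' t) (Ici 0) t) (hpos : ∀ t ∈ Ici 0, 0 < γ t)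
    (hslow : ∀ᶠ t in atTop, -γ' t ≤ γ t ^ 2 / 3) (hconv : ConvexOn ℝ univ Φ)
    (hΦ : ∀ u, HasFDerivAt Φ (innerSL ℝ (Φ' u)) u)
    (hargmin : {p : H | ∀ u, Φ p ≤ Φ u}.Nonempty) (hx : IsHeavyBallTrajectory_s13 γ Φ' g x v)
    (hg : IntegrableOn (fun t ↦ ‖g t‖ / γ t) (Ici 0)) :
    (∃ M : ℝ, ∀ t ≥ (0 : ℝ), ‖x t‖ ≤ M) ∧
    ∀ p ∈ {p : H | ∀ u, Φ p ≤ Φ u}, ∃ M : ℝ, ∀ t ≥ (0 : ℝ),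
      ‖x t - p + dampingWeight γ t • v t‖ ≤ M := by
  obtain ⟨T, hT⟩ := (hslow.and (eventually_ge_atTop 0)).exists_forall_of_atTop
  have hT0 : 0 ≤ T := (hT T le_rfl).2
  have hslowT : ∀ t ∈ Ici T, -γ' t ≤ γ t ^ 2 / 3 := fun t ht ↦ (hT t ht).1
  have hgrad : ∀ p u, Φ u - Φ p ≤ ⟪u - p, Φ' u⟫ := fun p u ↦ by
    have hle := fderiv_apply_sub_le_of_convexOn hconv (mem_univ u) (mem_univ p)
      (hΦ u).hasFDerivWithinAt
    rw [innerSL_apply_apply, ← neg_sub u p, inner_neg_right, real_inner_comm] at hle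
    linarith
  have hshift : ∀ p ∈ {p : H | ∀ u, Φ p ≤ Φ u}, ∃ M : ℝ, ∀ t ≥ (0 : ℝ),
      ‖x t - p + dampingWeight γ t • v t‖ ≤ M := fun p hp ↦
    hx.exists_norm_add_dampingWeight_smul_le hγ' hpos hT0 hslowT hΦ hp (hgrad p) hg
  refine ⟨?_, hshift⟩
  obtain ⟨p, hp⟩ := hargmin
  obtain ⟨M, hM⟩ := hshift p hp
  refine ⟨max ‖x 0 - p‖ M + ‖p‖, fun t ht ↦ (norm_le_norm_sub_add (x t) p).trans ?_⟩
  gcongr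
  exact norm_le_max_of_norm_add_smul_deriv_le
    (fun s hs ↦ (hx.hasDerivWithinAt_position s hs).sub_const p)
    (fun s hs ↦ dampingWeight_pos (integrableOn_exp_neg_integral hT0 hγ' hpos hslowT) hs) hM ht

end HeavyBall

theorem heavy_ball_trajectory_bounded
    {H : Type*} [NormedAddCommGroup H] [InnerProductSpace ℝ H] [CompleteSpace H]
    (c α : ℝ) (hc : 0 < c) (hα0 : 0 ≤ α) (hα1 : α < 1)
    (Φ : H → ℝ) (Φ' : H → H) (Φstar : ℝ)
    (hΦconv : ConvexOn ℝ Set.univ Φ)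
    (hΦdiff : ∀ u : H, HasGradientAt Φ (Φ' u) u)
    (hΦcont : Continuous Φ')
    (hargmin : {v : H | ∀ u, Φ v ≤ Φ u}.Nonempty)
    (hΦstar : ∀ v ∈ {v : H | ∀ u, Φ v ≤ Φ u}, Φ v = Φstar)
    (g : ℝ → H) (hg : IntegrableOn g (Ici (0:ℝ)))
    (x x' x'' : ℝ → H)
    (hx1 : ∀ t ∈ Ici (0:ℝ), HasDerivAt x (x' t) t)
    (hx2 : ∀ t ∈ Ici (0:ℝ), HasDerivAt x' (x'' t) t)
    (hode : ∀ t ∈ Ici (0:ℝ),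
      x'' t + (c / (1 + t) ^ α) • x' t + Φ' (x t) = g t)
    (hgα : IntegrableOn (fun t => (1 + t) ^ α * ‖g t‖) (Ici (0:ℝ))) :
    (∃ M : ℝ, ∀ t ≥ (0:ℝ), ‖x t‖ ≤ M) ∧
    ∀ xstar ∈ {v : H | ∀ u, Φ v ≤ Φ u}, ∃ M : ℝ, ∀ t ≥ (0:ℝ),
      ‖x t - xstar +
        (Real.exp (∫ s in (0:ℝ)..t, c / (1 + s) ^ α) *
          ∫ s in Ioi t, Real.exp (-(∫ u in (0:ℝ)..s, c / (1 + u) ^ α))) • x' t‖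
        ≤ M :=
  heavy_ball_trajectory_bounded_general
    (fun _ ht ↦ (hasDerivAt_powerDamping (neg_one_lt_zero.trans_le ht)).hasDerivWithinAt)
    (fun _ ht ↦ powerDamping_pos hc (neg_one_lt_zero.trans_le ht))
    (eventually_neg_deriv_powerDamping_le hc hα1) hΦconv (fun u ↦ (hΦdiff u).hasFDerivAt) hargmin
    (.of_hasDerivAt hx1 hx2 hode)
    (by simpa only [IntegrableOn, powerDamping, div_div_eq_mul_div, mul_comm] using hgα.div_const c)
end
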